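/- Define L₁ⁿ(x,y) = J₁ⁿ(x,y)·J₁ⁿ(y,x) − ∂_y J₁ⁿ(x,y)·(∫_x^y J₁ⁿ(u,x) du − (1/2)·sign(y − x)), where ∂_y J₁ⁿ is the derivative in the second variable. There is C > 0 such that for every even integer n ≥ 2 and all x, y ∈ [−2·n^{2/3}, ∞) with x ≠ y, x ≠ 0, y ≠ 0: |L₁ⁿ(x,y)| ≤ C·(Ĝ_{−1/4,1/2,1}(x,y) + Ĝ_{0,1/4,1}(x,y) + Ĝ_{1/4,1/4,0}(x,y) + Ĝ_{−3/4,1/4,1}(x,y) + Ĝ_{−1/2,1/2,2}(x,y) + Ĝ_{0,0,2}(x,y)). -/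

import Mathlib

open MeasureTheory Filter Set

noncomputable section

/-- The Airy function `Ai(x) = (1/π)·lim_{b→∞} ∫_0^b cos(t³/3 + x·t) dt`. -/
def Ai (x : ℝ) : ℝ :=
  (1 / Real.pi) *
    limUnder Filter.atTop (fun b : ℝ => ∫ t in (0:ℝ)..b, Real.cos (t ^ 3 / 3 + x * t))

/-- The Airy kernel. -/
def KAi (x y : ℝ) : ℝ :=
  if x = y then (deriv Ai x) ^ 2 - x * (Ai x) ^ 2
  else (Ai x * deriv Ai y - deriv Ai x * Ai y) / (x - y)

/-- One-point correlation function of the Airy₂ random point field. -/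
def rho (x : ℝ) : ℝ := (deriv Ai x) ^ 2 - x * (Ai x) ^ 2

/-- Probabilists' Hermite polynomial `Ĥ_m(x) = (−1)^m e^{x²/2} (d/dx)^m e^{−x²/2}`. -/
def hermiteP (m : ℕ) (x : ℝ) : ℝ :=
  (-1 : ℝ) ^ m * Real.exp (x ^ 2 / 2) * iteratedDeriv m (fun t => Real.exp (-t ^ 2 / 2)) x

/-- Normalized oscillator function `φ_m`. -/
def osc (m : ℕ) (x : ℝ) : ℝ :=
  (2 * Real.pi) ^ (-(1:ℝ)/4) * ((m.factorial : ℝ)) ^ (-(1:ℝ)/2) *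
    Real.exp (-x ^ 2 / 4) * hermiteP m x

/-- `ψ_mⁿ(x) = n^{1/12}·φ_m(2√n + n^{−1/6}·x)`. -/
def psiUp (n m : ℕ) (x : ℝ) : ℝ :=
  (n : ℝ) ^ ((1:ℝ)/12) * osc m (2 * Real.sqrt n + (n : ℝ) ^ (-(1:ℝ)/6) * x)

/-- `ψ_n = ψ_nⁿ`. -/
def psiN (n : ℕ) : ℝ → ℝ := psiUp n n

/-- The finite-`n` Airy kernel. -/
def KAiN (n : ℕ) (x y : ℝ) : ℝ :=
  if x = y then
    (deriv (psiN n) x) ^ 2 - psiN n x * deriv (deriv (psiN n)) x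
      - (1 / (2 * (n : ℝ) ^ ((1:ℝ)/3))) * (psiN n x) ^ 2
  else
    (psiN n x * deriv (psiN n) y - deriv (psiN n) x * psiN n y) / (x - y)
      - (1 / (2 * (n : ℝ) ^ ((1:ℝ)/3))) * (psiN n x * psiN n y)

/-- `(εf)(x) = (1/2)·∫_ℝ sign(x − y)·f(y) dy`. -/
def epsF (f : ℝ → ℝ) (x : ℝ) : ℝ := (1/2) * ∫ y : ℝ, Real.sign (x - y) * f y

/-- `εψ_n`. -/
def epsPsi (n : ℕ) : ℝ → ℝ := epsF (psiN n)

/-- `J₁(x,y) = K_Ai(x,y) + (1/2)·Ai(x)·(1 − ∫_y^∞ Ai(u) du)`. -/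
def J1 (x y : ℝ) : ℝ := KAi x y + (1/2) * Ai x * (1 - ∫ u in Set.Ioi y, Ai u)

/-- Scalar part of the quaternion product of Airy₁ kernels. -/
def L1 (x y : ℝ) : ℝ :=
  J1 x y * J1 y x -
    deriv (fun v => J1 x v) y * ((∫ u in x..y, J1 u x) - (1/2) * Real.sign (y - x))

/-- `J₁ⁿ(x,y) = K_Aiⁿ(x,y) + (1/2)·ψ_{n−1}ⁿ(x)·(εψ_n)(y)`. -/
def J1N (n : ℕ) (x y : ℝ) : ℝ :=
  KAiN n x y + (1/2) * psiUp n (n - 1) x * epsPsi n y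

/-- Scalar part of the quaternion product of finite-`n` Airy₁ kernels. -/
def L1N (n : ℕ) (x y : ℝ) : ℝ :=
  J1N n x y * J1N n y x -
    deriv (fun v => J1N n x v) y * ((∫ u in x..y, J1N n u x) - (1/2) * Real.sign (y - x))

/-- `ρ̂(x) = (1/π)·√(−x)` for `x < 0`, and `0` otherwise. -/
def rhoHat (x : ℝ) : ℝ := if x < 0 then Real.sqrt (-x) / Real.pi else 0

/-- `ρ̂ⁿ(x) = (1/π)·√(−x·(1 + x/(4·n^{2/3})))` on `(−4n^{2/3}, 0)`, and `0` otherwise. -/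
def rhoHatN (n : ℕ) (x : ℝ) : ℝ :=
  if -(4 * (n : ℝ) ^ ((2:ℝ)/3)) < x ∧ x < 0 then
    Real.sqrt (-x * (1 + x / (4 * (n : ℝ) ^ ((2:ℝ)/3)))) / Real.pi
  else 0

/-- `G_{a,b,c}(x,y) = |x|^{−a}·|y|^{−b}·|x−y|^{−c}`. -/
def Gf (a b c : ℝ) (x y : ℝ) : ℝ := |x| ^ (-a) * |y| ^ (-b) * |x - y| ^ (-c)

/-- `Ĝ_{a,b,c}(x,y) = G_{a,b,c}(x,y) + G_{a,b,c}(y,x)`. -/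
def Ghat (a b c : ℝ) (x y : ℝ) : ℝ := Gf a b c x y + Gf a b c y x

/-- Soft-edge one-point correlation function of the `n`-point GUE ensemble. -/
def rhoN (n : ℕ) (x : ℝ) : ℝ :=
  (deriv (psiN n) x) ^ 2 - (x ^ 2 / (4 * (n : ℝ) ^ ((2:ℝ)/3)) + x) * (psiN n x) ^ 2

end


/-- potential -/
noncomputable def Vq (ν x : ℝ) : ℝ := x + x ^ 2 / (4 * ν ^ 2) - 1 / (2 * ν)

/-- abstract decaying solution -/
structure Sol (ν : ℝ) (f f' : ℝ → ℝ) : Prop where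
  hν : 1 ≤ ν
  hd : ∀ x, HasDerivAt f (f' x) x
  hd' : ∀ x, HasDerivAt f' (Vq ν x * f x) x
  init : f (-(2 * ν ^ 2)) ^ 2 ≤ 1 / ν
  init' : f' (-(2 * ν ^ 2)) = 0
  lim1 : Tendsto (fun x => f x * f' x) atTop (nhds 0)
  lim2 : Tendsto (fun x => f' x ^ 2 - Vq ν x * f x ^ 2) atTop (nhds 0)

lemma abs_sub_le_of_hasDerivAt {h R h' R' : ℝ → ℝ} {a b : ℝ} (hab : a ≤ b)
    (hh : ∀ u ∈ Icc a b, HasDerivAt h (h' u) u) (hR : ∀ u ∈ Icc a b, HasDerivAt R (R' u) u)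
    (hle : ∀ u ∈ Icc a b, |h' u| ≤ R' u) : |h b - h a| ≤ R b - R a := by
  have m1 : MonotoneOn (fun u => R u - h u) (Icc a b) := by
    apply monotoneOn_of_hasDerivWithinAt_nonneg (convex_Icc a b) (f' := fun u => R' u - h' u)
    · intro u hu; exact ((hR u hu).sub (hh u hu)).continuousAt.continuousWithinAt
    · intro u hu; exact ((hR u (interior_subset hu)).sub (hh u (interior_subset hu))).hasDerivWithinAt
    · intro u hu; have := abs_le.1 (hle u (interior_subset hu)); linarith [this.2]
  have m2 : MonotoneOn (fun u => R u + h u) (Icc a b) := by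
    apply monotoneOn_of_hasDerivWithinAt_nonneg (convex_Icc a b) (f' := fun u => R' u + h' u)
    · intro u hu; exact ((hR u hu).add (hh u hu)).continuousAt.continuousWithinAt
    · intro u hu; exact ((hR u (interior_subset hu)).add (hh u (interior_subset hu))).hasDerivWithinAt
    · intro u hu; have := abs_le.1 (hle u (interior_subset hu)); linarith [this.1]
  have h1 := m1 (left_mem_Icc.2 hab) (right_mem_Icc.2 hab) hab
  have h2 := m2 (left_mem_Icc.2 hab) (right_mem_Icc.2 hab) hab
  simp only at h1 h2
  rw [abs_le]; constructor <;> linarith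

lemma antitoneOn_of_hasDerivAt {g g' : ℝ → ℝ} {s : Set ℝ} (hs : Convex ℝ s)
    (hg : ∀ u ∈ s, HasDerivAt g (g' u) u) (hle : ∀ u ∈ s, g' u ≤ 0) : AntitoneOn g s := by
  apply antitoneOn_of_hasDerivWithinAt_nonpos hs (f' := g')
  · intro u hu; exact (hg u hu).continuousAt.continuousWithinAt
  · intro u hu; exact (hg u (interior_subset hu)).hasDerivWithinAt
  · intro u hu; exact hle u (interior_subset hu)

lemma Vq_hasDerivAt (ν x : ℝ) : HasDerivAt (Vq ν) (1 + x / (2 * ν ^ 2)) x := by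
  unfold Vq
  have := ((hasDerivAt_id x).add (((hasDerivAt_id x).pow 2).div_const (4 * ν ^ 2))).sub_const (1 / (2 * ν))
  refine this.congr_deriv ?_
  simp; ring

lemma Vq_neg_bounds {ν x : ℝ} (hν : 1 ≤ ν) (h1 : -(2 * ν ^ 2) ≤ x) (h2 : x ≤ 0) :
    -x / 2 ≤ -Vq ν x ∧ -Vq ν x ≤ -x + 1 / 2 := by
  unfold Vq
  have hn : 0 < ν := by linarith
  have e : x ^ 2 / (4 * ν ^ 2) ≤ -x / 2 := by
    rw [div_le_iff₀ (by positivity)]; nlinarith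
  have e0 : 0 ≤ x ^ 2 / (4 * ν ^ 2) := by positivity
  have e1 : 1 / (2 * ν) ≤ 1 / 2 := by
    apply one_div_le_one_div_of_le <;> linarith
  have e2 : 0 < 1 / (2 * ν) := by positivity
  constructor <;> linarith

lemma Sol.left {ν : ℝ} {f f' : ℝ → ℝ} (S : Sol ν f f') {x : ℝ} (h1 : -(2 * ν ^ 2) ≤ x)
    (h2 : x ≤ -2) : √(-Vq ν x) * f x ^ 2 + f' x ^ 2 / √(-Vq ν x) ≤ 8 := by
  have hν := S.hν
  set a := -(2 * ν ^ 2) with ha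
  have hν0 : 0 < ν := by linarith
  set p : ℝ → ℝ := fun u => -Vq ν u with hp
  set r : ℝ → ℝ := fun u => √(p u) with hr
  set d : ℝ → ℝ := fun u => -(1 + u / (2 * ν ^ 2)) with hd
  have pd : ∀ u, HasDerivAt p (d u) u := fun u => (Vq_hasDerivAt ν u).neg
  have p1 : ∀ u ∈ Icc a (-2), 1 ≤ p u := by
    intro u hu
    have := (Vq_neg_bounds hν hu.1 (by linarith [hu.2])).1
    simp only [hp]; linarith [hu.2]
  have r1 : ∀ u ∈ Icc a (-2), 1 ≤ r u := fun u hu => Real.one_le_sqrt.2 (p1 u hu)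
  have r2 : ∀ u ∈ Icc a (-2), r u ^ 2 = p u := fun u hu => Real.sq_sqrt (by linarith [p1 u hu])
  have rd : ∀ u ∈ Icc a (-2), HasDerivAt r (d u / (2 * r u)) u := by
    intro u hu
    exact (pd u).sqrt (by linarith [p1 u hu])
  have d0 : ∀ u ∈ Icc a (-2), -1 ≤ d u ∧ d u ≤ 0 := by
    intro u hu
    have : -1 ≤ u / (2 * ν ^ 2) := by
      rw [le_div_iff₀ (by positivity)]; linarith [hu.1]
    have : u / (2 * ν ^ 2) ≤ 0 := by
      apply div_nonpos_of_nonpos_of_nonneg; linarith [hu.2]; positivity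
    simp only [hd]; constructor <;> linarith
  have dd : ∀ u, HasDerivAt d (-(1 / (2 * ν ^ 2))) u := by
    intro u
    exact (((hasDerivAt_id u).div_const (2 * ν ^ 2)).const_add 1).neg
  set k : ℝ → ℝ := fun u => d u / r u ^ 3 with hk
  set k' : ℝ → ℝ := fun u => -(1 / (2 * ν ^ 2)) / r u ^ 3 - (3 / 2) * d u ^ 2 / r u ^ 5 with hk'
  have kd : ∀ u ∈ Icc a (-2), HasDerivAt k (k' u) u := by
    intro u hu
    have hr0 : r u ≠ 0 := by linarith [r1 u hu]
    refine ((dd u).div ((rd u hu).pow 3) (pow_ne_zero _ hr0)).congr_deriv ?_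
    simp only [hk', Pi.pow_apply]; field_simp; ring
  have k'0 : ∀ u ∈ Icc a (-2), k' u ≤ 0 := by
    intro u hu
    have hr0 := r1 u hu
    have : 0 ≤ (3 / 2) * d u ^ 2 / r u ^ 5 := by positivity
    have : 0 ≤ (1 / (2 * ν ^ 2)) / r u ^ 3 := by positivity
    simp only [hk', neg_div]; linarith
  have k1 : ∀ u ∈ Icc a (-2), -1 ≤ k u ∧ k u ≤ 0 := by
    intro u hu
    have hr0 := r1 u hu
    have h3 : 1 ≤ r u ^ 3 := one_le_pow₀ hr0
    obtain ⟨e1, e2⟩ := d0 u hu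
    constructor
    · simp only [hk]; rw [le_div_iff₀ (by positivity)]; linarith
    · exact div_nonpos_of_nonpos_of_nonneg e2 (by positivity)
  set G0 : ℝ → ℝ := fun u => r u * f u ^ 2 + f' u ^ 2 / r u with hG0
  set G : ℝ → ℝ := fun u => G0 u + (1 / 2) * k u * (f u * f' u) with hG
  have ff : ∀ u ∈ Icc a (-2), |f u * f' u| ≤ G0 u / 2 := by
    intro u hu
    have hr0 := r1 u hu
    have e : G0 u / 2 - |f u * f' u| = (r u * |f u| - |f' u|) ^ 2 / (2 * r u) := by
      simp only [hG0, abs_mul]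
      rw [← sq_abs (f u), ← sq_abs (f' u)]
      field_simp; ring
    have : 0 ≤ (r u * |f u| - |f' u|) ^ 2 / (2 * r u) := by positivity
    linarith
  have GG : ∀ u ∈ Icc a (-2), |(1 / 2) * k u * (f u * f' u)| ≤ G0 u / 4 := by
    intro u hu
    rw [abs_mul, abs_mul, abs_of_pos (by norm_num : (0:ℝ) < 1 / 2)]
    have h1 : |k u| ≤ 1 := abs_le.2 ⟨(k1 u hu).1, by linarith [(k1 u hu).2]⟩
    have h2 := ff u hu
    have := mul_le_mul h1 h2 (abs_nonneg _) zero_le_one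
    linarith
  have Gd : ∀ u ∈ Icc a (-2), HasDerivAt G ((1 / 2) * k' u * (f u * f' u)) u := by
    intro u hu
    have hr0 : r u ≠ 0 := by linarith [r1 u hu]
    have e1 := (rd u hu).mul ((S.hd u).pow 2)
    have e2 := ((S.hd' u).pow 2).div (rd u hu) hr0
    have e3 := ((kd u hu).const_mul (1 / 2)).mul ((S.hd u).mul (S.hd' u))
    refine ((e1.add e2).add e3).congr_deriv ?_
    have hV : Vq ν u = - r u ^ 2 := by rw [r2 u hu]; simp [hp]
    simp only [hk, hk', hV, Pi.pow_apply, Pi.mul_apply]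
    field_simp; ring
  have anti : AntitoneOn (fun u => G u * Real.exp (k u / 3)) (Icc a (-2)) := by
    apply antitoneOn_of_hasDerivAt (convex_Icc _ _)
      (g' := fun u => ((1 / 2) * k' u * (f u * f' u) + G u * (k' u / 3)) * Real.exp (k u / 3))
    · intro u hu
      refine ((Gd u hu).mul (((kd u hu).div_const 3).exp)).congr_deriv ?_
      ring
    · intro u hu
      apply mul_nonpos_of_nonpos_of_nonneg _ (Real.exp_pos _).le
      have h1 := abs_le.1 (ff u hu)
      have h2 := (abs_le.1 (GG u hu)).1
      have h3 : 3 / 4 * G0 u ≤ G u := by simp only [hG]; linarith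
      have h4 := k'0 u hu
      have : 0 ≤ (1 / 2) * (f u * f' u) + G u / 3 := by linarith [h1.1]
      nlinarith
  have ha2 : a ≤ -2 := by rw [ha]; nlinarith
  have hx : x ∈ Icc a (-2) := ⟨h1, h2⟩
  have haa : a ∈ Icc a (-2) := ⟨le_rfl, ha2⟩
  have key := anti haa hx h1
  simp only at key
  have ka : k a = 0 := by
    have : d a = 0 := by simp only [hd, ha]; field_simp; ring
    simp only [hk, this, zero_div]
  have Ga : G a ≤ 2 := by
    have e : G a = r a * f a ^ 2 := by
      have h0 : f' a = 0 := S.init'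
      simp only [hG, hG0, h0]; simp
    rw [e]
    have hra : r a ≤ 2 * ν := by
      apply Real.sqrt_le_iff.2; constructor; positivity
      have := (Vq_neg_bounds hν haa.1 (by linarith)).2
      simp only [hp]; 
      nlinarith
    calc r a * f a ^ 2 ≤ (2 * ν) * (1 / ν) := by
          apply mul_le_mul hra S.init (sq_nonneg _) (by positivity)
      _ = 2 := by field_simp
  rw [ka] at key
  simp only [zero_div, Real.exp_zero, mul_one] at key
  have hG3 : 3 / 4 * G0 x ≤ G x := by
    have h2 := (abs_le.1 (GG x hx)).1
    simp only [hG]; linarith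
  have hexp : 1 / 2 ≤ Real.exp (k x / 3) := by
    have := Real.add_one_le_exp (k x / 3)
    linarith [(k1 x hx).1]
  have hG0n : 0 ≤ G0 x := by
    have := r1 x hx
    simp only [hG0]; positivity
  change G0 x ≤ 8
  have : 3 / 4 * G0 x * (1 / 2) ≤ G x * Real.exp (k x / 3) := by
    apply mul_le_mul hG3 hexp (by norm_num); linarith
  linarith

lemma Sol.mid {ν : ℝ} {f f' : ℝ → ℝ} (S : Sol ν f f') {x : ℝ} (h1 : -2 ≤ x)
    (h2 : x ≤ 4) : f x ^ 2 + f' x ^ 2 ≤ (f (-2) ^ 2 + f' (-2) ^ 2) * Real.exp 60 := by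
  have hν := S.hν
  have hν0 : 0 < ν := by linarith
  have hV : ∀ u ∈ Icc (-2:ℝ) 4, |1 + Vq ν u| ≤ 10 := by
    intro u hu
    have e0 : 0 ≤ u ^ 2 / (4 * ν ^ 2) := by positivity
    have e3 : u ^ 2 / (4 * ν ^ 2) ≤ 4 := by
      rw [div_le_iff₀ (by positivity)]; nlinarith [hu.1, hu.2]
    have e1 : 1 / (2 * ν) ≤ 1 / 2 := by
      apply one_div_le_one_div_of_le <;> linarith
    have e2 : 0 < 1 / (2 * ν) := by positivity
    unfold Vq
    rw [abs_le]; constructor <;> linarith [hu.1, hu.2]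
  have anti : AntitoneOn (fun u => (f u ^ 2 + f' u ^ 2) * Real.exp (-10 * u)) (Icc (-2) 4) := by
    apply antitoneOn_of_hasDerivAt (convex_Icc _ _)
      (g' := fun u => (2 * (1 + Vq ν u) * (f u * f' u) - 10 * (f u ^ 2 + f' u ^ 2)) * Real.exp (-10 * u))
    · intro u hu
      have e := (((hasDerivAt_id u).const_mul (-10)).exp)
      refine ((((S.hd u).pow 2).add ((S.hd' u).pow 2)).mul e).congr_deriv ?_
      simp; ring
    · intro u hu
      apply mul_nonpos_of_nonpos_of_nonneg _ (Real.exp_pos _).le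
      have h := hV u hu
      have h3 : |2 * (f u * f' u)| ≤ f u ^ 2 + f' u ^ 2 := by
        rw [abs_le]; constructor <;> nlinarith [sq_nonneg (f u + f' u), sq_nonneg (f u - f' u)]
      have h4 := mul_le_mul h h3 (abs_nonneg _) (by norm_num)
      rw [← abs_mul] at h4
      have := le_abs_self ((1 + Vq ν u) * (2 * (f u * f' u)))
      linarith
  have key := anti (by norm_num : (-2:ℝ) ∈ Icc (-2:ℝ) 4) ⟨h1, h2⟩ h1
  simp only at key
  have e1 : Real.exp (-10 * x) * Real.exp (10 * x) = 1 := by rw [← Real.exp_add]; simp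
  have e2 : Real.exp (-10 * (-2)) * Real.exp (10 * x) ≤ Real.exp 60 := by
    rw [← Real.exp_add]; apply Real.exp_le_exp.2; linarith
  calc f x ^ 2 + f' x ^ 2 = (f x ^ 2 + f' x ^ 2) * Real.exp (-10 * x) * Real.exp (10 * x) := by
        rw [mul_assoc, e1, mul_one]
    _ ≤ (f (-2) ^ 2 + f' (-2) ^ 2) * Real.exp (-10 * (-2)) * Real.exp (10 * x) := by gcongr
    _ ≤ _ := by rw [mul_assoc]; gcongr

lemma Vq_pos {ν x : ℝ} (hν : 1 ≤ ν) (h : 1 ≤ x) : 1 / 4 ≤ Vq ν x := by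
  have hν0 : 0 < ν := by linarith
  have e0 : 0 ≤ x ^ 2 / (4 * ν ^ 2) := by positivity
  have e1 : 1 / (2 * ν) ≤ 1 / 2 := by
    apply one_div_le_one_div_of_le <;> linarith
  unfold Vq; linarith

lemma Sol.rightA {ν : ℝ} {f f' : ℝ → ℝ} (S : Sol ν f f') {x : ℝ} (h1 : 1 ≤ x) :
    f x * f' x ≤ 0 := by
  have anti : AntitoneOn (fun u => - (f u * f' u)) (Ici 1) := by
    apply antitoneOn_of_hasDerivAt (convex_Ici _) (g' := fun u => -(f' u ^ 2 + Vq ν u * f u ^ 2))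
    · intro u hu
      refine ((S.hd u).mul (S.hd' u)).neg.congr_deriv ?_
      ring
    · intro u hu
      have := Vq_pos S.hν hu
      have : 0 ≤ f' u ^ 2 + Vq ν u * f u ^ 2 := by positivity
      linarith
  refine ge_of_tendsto S.lim1 ?_
  filter_upwards [eventually_ge_atTop x] with u hu
  have := anti h1 (h1.trans hu) hu
  simp only at this; linarith

lemma Sol.rightB {ν : ℝ} {f f' : ℝ → ℝ} (S : Sol ν f f') {x : ℝ} (h1 : 1 ≤ x) :
    Vq ν x * f x ^ 2 ≤ f' x ^ 2 := by
  have anti : AntitoneOn (fun u => f' u ^ 2 - Vq ν u * f u ^ 2) (Ici 1) := by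
    apply antitoneOn_of_hasDerivAt (convex_Ici _) (g' := fun u => -((1 + u / (2 * ν ^ 2)) * f u ^ 2))
    · intro u hu
      refine (((S.hd' u).pow 2).sub ((Vq_hasDerivAt ν u).mul ((S.hd u).pow 2))).congr_deriv ?_
      simp; ring
    · intro u hu
      have hu : 1 ≤ u := hu
      have : 0 ≤ (1 + u / (2 * ν ^ 2)) * f u ^ 2 := by positivity
      linarith
  have : 0 ≤ f' x ^ 2 - Vq ν x * f x ^ 2 := by
    refine le_of_tendsto S.lim2 ?_
    filter_upwards [eventually_ge_atTop x] with u hu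
    exact anti h1 (h1.trans hu) hu
  linarith

lemma Sol.rightC {ν : ℝ} {f f' : ℝ → ℝ} (S : Sol ν f f') {x : ℝ} (h1 : 1 ≤ x) :
    f x ^ 2 ≤ f 1 ^ 2 * Real.exp (1 - x) := by
  have anti : AntitoneOn (fun u => f u ^ 2 * Real.exp u) (Ici 1) := by
    apply antitoneOn_of_hasDerivAt (convex_Ici _)
      (g' := fun u => (2 * (f u * f' u) + f u ^ 2) * Real.exp u)
    · intro u hu
      refine (((S.hd u).pow 2).mul (Real.hasDerivAt_exp u)).congr_deriv ?_
      simp; ring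
    · intro u hu
      have hu : 1 ≤ u := hu
      apply mul_nonpos_of_nonpos_of_nonneg _ (Real.exp_pos _).le
      have a := S.rightA hu
      have b := S.rightB hu
      have c := Vq_pos S.hν hu
      have d : (f u) ^ 2 ≤ (2 * f' u) ^ 2 := by nlinarith [sq_nonneg (f u)]
      have e := sq_le_sq.1 d
      have g : f u ^ 2 = |f u| * |f u| := by rw [← sq_abs]; ring
      have h : f u * f' u = -(|f u| * |f' u|) := by rw [← abs_mul, abs_of_nonpos a]; ring
      rw [g, h]
      rw [abs_mul, abs_two] at e
      nlinarith [abs_nonneg (f u)]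
  have key := anti (mem_Ici.2 le_rfl) h1 h1
  simp only at key
  have e1 : Real.exp x * Real.exp (-x) = 1 := by rw [← Real.exp_add]; simp
  calc f x ^ 2 = f x ^ 2 * Real.exp x * Real.exp (-x) := by rw [mul_assoc, e1, mul_one]
    _ ≤ f 1 ^ 2 * Real.exp 1 * Real.exp (-x) := by gcongr
    _ = _ := by rw [mul_assoc, ← Real.exp_add]; rfl

lemma Sol.rightD {ν : ℝ} {f f' : ℝ → ℝ} (S : Sol ν f f') {x y : ℝ} (h1 : 1 ≤ x) (hxy : x ≤ y) :
    f' y ^ 2 ≤ f' x ^ 2 := by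
  have anti : AntitoneOn (fun u => f' u ^ 2) (Ici 1) := by
    apply antitoneOn_of_hasDerivAt (convex_Ici _)
      (g' := fun u => 2 * Vq ν u * (f u * f' u))
    · intro u hu
      refine ((S.hd' u).pow 2).congr_deriv ?_
      simp; ring
    · intro u hu
      have a := S.rightA hu
      have c := Vq_pos S.hν hu
      exact mul_nonpos_of_nonneg_of_nonpos (by linarith) a
  exact anti h1 (h1.trans hxy) hxy

lemma Sol.rightE {ν : ℝ} {f f' : ℝ → ℝ} (S : Sol ν f f') {x : ℝ} (h1 : 2 ≤ x) :
    f' x ^ 2 ≤ |f (x - 1)| * |f' (x - 1)| := by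
  have anti : AntitoneOn (fun u => f' x ^ 2 * u - f u * f' u) (Icc 1 x) := by
    apply antitoneOn_of_hasDerivAt (convex_Icc _ _)
      (g' := fun u => f' x ^ 2 - (f' u ^ 2 + Vq ν u * f u ^ 2))
    · intro u hu
      refine (((hasDerivAt_id u).const_mul (f' x ^ 2)).sub ((S.hd u).mul (S.hd' u))).congr_deriv ?_
      simp; ring
    · intro u hu
      have := Vq_pos S.hν hu.1
      have : 0 ≤ Vq ν u * f u ^ 2 := by positivity
      have := S.rightD hu.1 hu.2
      linarith
  have key := anti (⟨by linarith, by linarith⟩ : x - 1 ∈ Icc 1 x) ⟨by linarith, le_rfl⟩ (by linarith)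
  simp only at key
  have a := S.rightA (x := x) (by linarith)
  have := neg_le_abs (f (x-1) * f' (x-1))
  rw [abs_mul] at this
  linarith

/-- exponential decay to the right of `-2` -/
lemma right_bound : ∃ C : ℝ, 0 < C ∧ ∀ ν f f', Sol ν f f' → ∀ x : ℝ, -2 ≤ x →
    |f x| ≤ C * Real.exp (-x / 4) ∧ |f' x| ≤ C * Real.exp (-x / 4) := by
  obtain ⟨B, hB, hB0⟩ : ∃ B : ℝ, 1 ≤ B ∧ ∀ ν f f', Sol ν f f' → ∀ x : ℝ, -2 ≤ x → x ≤ 4 →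
      |f x| ≤ B ∧ |f' x| ≤ B := by
    refine ⟨1 + 100 * Real.exp 60, by linarith [Real.exp_pos 60], ?_⟩
    intro ν f f' S x h1 h2
    have hν := S.hν
    have L := S.left (x := -2) (by nlinarith) le_rfl
    have V := Vq_neg_bounds hν (x := -2) (by nlinarith) (by norm_num)
    set r := √(-Vq ν (-2)) with hr
    have r1 : 1 ≤ r := Real.one_le_sqrt.2 (by linarith [V.1])
    have r2 : r ≤ 2 := Real.sqrt_le_iff.2 ⟨by norm_num, by linarith [V.2]⟩
    have a1 : f (-2) ^ 2 ≤ r * f (-2) ^ 2 := by nlinarith [sq_nonneg (f (-2))]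
    have a2 : f' (-2) ^ 2 ≤ 2 * (f' (-2) ^ 2 / r) := by
      rw [mul_div_assoc', le_div_iff₀ (by linarith)]; nlinarith [sq_nonneg (f' (-2))]
    have a3 : 0 ≤ r * f (-2) ^ 2 := by positivity
    have M := S.mid h1 h2
    have E : f x ^ 2 + f' x ^ 2 ≤ (1 + 100 * Real.exp 60) ^ 2 := by
      have : (f (-2) ^ 2 + f' (-2) ^ 2) * Real.exp 60 ≤ 100 * Real.exp 60 := by
        gcongr; linarith
      nlinarith [Real.exp_pos 60]
    constructor
    · apply abs_le_of_sq_le_sq _ (by positivity)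
      nlinarith [sq_nonneg (f' x)]
    · apply abs_le_of_sq_le_sq _ (by positivity)
      nlinarith [sq_nonneg (f x)]
  refine ⟨B * Real.exp 1, by positivity, ?_⟩
  intro ν f f' S x hx
  rw [mul_assoc, ← Real.exp_add]
  rcases le_total x 4 with h4 | h4
  · have := hB0 ν f f' S x hx h4
    have e : B ≤ B * Real.exp (1 + -x / 4) := by
      have := Real.add_one_le_exp (1 + -x/4)
      nlinarith
    exact ⟨this.1.trans e, this.2.trans e⟩
  · have h1 := hB0 ν f f' S 1 (by norm_num) (by norm_num)
    have fb : ∀ u, 1 ≤ u → |f u| ≤ B * Real.exp ((1 - u) / 2) := by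
      intro u hu
      apply abs_le_of_sq_le_sq _ (by positivity)
      rw [mul_pow, ← Real.exp_nat_mul]
      refine (S.rightC hu).trans ?_
      have : f 1 ^ 2 ≤ B ^ 2 := sq_le_sq.2 (by rw [abs_of_pos (by linarith : 0 < B)]; exact h1.1)
      have e : ((2:ℕ):ℝ) * ((1 - u) / 2) = 1 - u := by push_cast; ring
      rw [e]; gcongr
    constructor
    · refine (fb x (by linarith)).trans ?_
      gcongr; linarith
    · apply abs_le_of_sq_le_sq _ (by positivity)
      have a := S.rightE (x := x) (by linarith)
      have b := fb (x - 1) (by linarith)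
      have c : |f' (x - 1)| ≤ B :=
        (sq_le_sq.1 (S.rightD le_rfl (by linarith : 1 ≤ x - 1))).trans h1.2
      rw [mul_pow, ← Real.exp_nat_mul]
      calc f' x ^ 2 ≤ |f (x - 1)| * |f' (x - 1)| := a
        _ ≤ (B * Real.exp ((1 - (x - 1)) / 2)) * B := by gcongr
        _ = B ^ 2 * Real.exp ((1 - (x - 1)) / 2) := by ring
        _ ≤ _ := by
          gcongr; push_cast; linarith


/-- weight `(1+|x|)^{1/4}` -/
noncomputable def wt (x : ℝ) : ℝ := (1 + |x|) ^ ((1:ℝ) / 4)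

lemma wt_pow (x : ℝ) : wt x ^ 4 = 1 + |x| := by
  unfold wt
  rw [← Real.rpow_natCast, ← Real.rpow_mul (by positivity)]; norm_num

lemma one_le_wt (x : ℝ) : 1 ≤ wt x := by
  unfold wt
  apply Real.one_le_rpow _ (by norm_num); linarith [abs_nonneg x]

lemma wt_pos (x : ℝ) : 0 < wt x := by linarith [one_le_wt x]

lemma wt_hasDerivAt_pos {x : ℝ} (hx : 0 < x) : HasDerivAt wt (1 / (4 * wt x ^ 3)) x := by
  have e : wt =ᶠ[nhds x] fun u => (1 + u) ^ ((1:ℝ) / 4) := by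
    filter_upwards [lt_mem_nhds hx] with u hu
    simp [wt, abs_of_pos hu]
  have h : HasDerivAt (fun u : ℝ => (1 + u) ^ ((1:ℝ) / 4)) (1 / (4 * wt x ^ 3)) x := by
    refine (((hasDerivAt_id x).const_add 1).rpow_const (p := 1 / 4) (Or.inl (by simp; linarith))).congr_deriv ?_
    have h1 : wt x ^ 3 = (1 + x) ^ ((3:ℝ) / 4) := by
      unfold wt; rw [abs_of_pos hx, ← Real.rpow_natCast, ← Real.rpow_mul (by positivity)]; norm_num
    rw [h1, id, show (1:ℝ) / 4 - 1 = -(3 / 4) by norm_num, Real.rpow_neg (by positivity)]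
    field_simp
  exact h.congr_of_eventuallyEq e

lemma wt_neg (x : ℝ) : wt (-x) = wt x := by simp [wt]

lemma wt_hasDerivAt_neg {x : ℝ} (hx : x < 0) : HasDerivAt wt (-(1 / (4 * wt x ^ 3))) x := by
  have h := wt_hasDerivAt_pos (x := -x) (by linarith)
  have h2 := (HasDerivAt.comp x h (hasDerivAt_neg x))
  rw [wt_neg] at h2
  have : wt ∘ Neg.neg = wt := by ext u; simp [wt_neg]
  rw [this] at h2
  refine h2.congr_deriv (by ring)

lemma wt_peetre {x u s : ℝ} (h : |x| ≤ |u| + |s|) : wt x ≤ wt u * wt s := by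
  apply le_of_pow_le_pow_left₀ (n := 4) (by norm_num) (by have := wt_pos u; have := wt_pos s; positivity)
  rw [mul_pow, wt_pow, wt_pow, wt_pow]
  nlinarith [abs_nonneg u, abs_nonneg s]

lemma exp_wt {x : ℝ} (hx : -2 ≤ x) :
    Real.exp (-x / 4) ≤ (6144 * Real.exp (5 / 4)) / wt x ^ 16 := by
  have hw := wt_pos x
  rw [le_div_iff₀ (by positivity)]
  have e : wt x ^ 16 = (1 + |x|) ^ 4 := by rw [← wt_pow]; ring
  have h1 : 1 + |x| ≤ x + 5 := by
    rcases abs_cases x with h | h <;> linarith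
  have h2 := Real.pow_div_factorial_le_exp ((x + 5) / 4) (by linarith) 4
  have h3 : (1 + |x|) ^ 4 ≤ (x + 5) ^ 4 := by gcongr
  have h4 : (x + 5) ^ 4 ≤ 6144 * Real.exp ((x + 5) / 4) := by
    have : ((x + 5) / 4) ^ 4 / (Nat.factorial 4 : ℝ) = (x + 5) ^ 4 / 6144 := by
      norm_num [Nat.factorial]; ring
    rw [this] at h2; linarith
  rw [e]
  calc Real.exp (-x / 4) * (1 + |x|) ^ 4 ≤ Real.exp (-x / 4) * (6144 * Real.exp ((x + 5) / 4)) := by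
        gcongr; linarith
    _ = 6144 * (Real.exp (-x / 4) * Real.exp ((x + 5) / 4)) := by ring
    _ = _ := by rw [← Real.exp_add]; congr 2; ring

/-- decay on the right in terms of weight -/
lemma right_bound' : ∃ C : ℝ, 0 < C ∧ ∀ ν f f', Sol ν f f' → ∀ x : ℝ, -2 ≤ x →
    |f x| ≤ C / wt x ^ 16 ∧ |f' x| ≤ C / wt x ^ 16 := by
  obtain ⟨C, hC, h⟩ := right_bound
  refine ⟨C * (6144 * Real.exp (5 / 4)), by positivity, ?_⟩
  intro ν f f' S x hx
  have e := exp_wt hx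
  obtain ⟨a, b⟩ := h ν f f' S x hx
  have : C * Real.exp (-x / 4) ≤ C * (6144 * Real.exp (5 / 4)) / wt x ^ 16 := by
    rw [mul_div_assoc]; gcongr
  exact ⟨a.trans this, b.trans this⟩

lemma left_bound {ν : ℝ} {f f' : ℝ → ℝ} (S : Sol ν f f') {x : ℝ} (h1 : -(2 * ν ^ 2) ≤ x)
    (h2 : x ≤ -2) : |f x| ≤ 4 / wt x ∧ |f' x| ≤ 4 * wt x ∧ wt x ^ 4 / 4 ≤ -Vq ν x ∧
      -Vq ν x ≤ wt x ^ 4 := by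
  have L := S.left h1 h2
  have V := Vq_neg_bounds S.hν h1 (by linarith)
  have hw := one_le_wt x
  have hw4 : wt x ^ 4 = 1 - x := by rw [wt_pow, abs_of_nonpos (by linarith)]; ring
  have V1 : wt x ^ 4 / 4 ≤ -Vq ν x := by linarith [V.1]
  have V2 : -Vq ν x ≤ wt x ^ 4 := by linarith [V.2]
  set r := √(-Vq ν x) with hr
  have r1 : wt x ^ 2 / 2 ≤ r := Real.le_sqrt_of_sq_le (by nlinarith)
  have r2 : r ≤ wt x ^ 2 := Real.sqrt_le_iff.2 ⟨by positivity, by nlinarith⟩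
  have r0 : 0 < r := lt_of_lt_of_le (by positivity) r1
  have n1 : 0 ≤ r * f x ^ 2 := by positivity
  have n2 : 0 ≤ f' x ^ 2 / r := by positivity
  refine ⟨?_, ?_, V1, V2⟩
  · apply abs_le_of_sq_le_sq _ (by positivity)
    rw [div_pow, le_div_iff₀ (by positivity)]
    nlinarith [sq_nonneg (f x)]
  · apply abs_le_of_sq_le_sq _ (by positivity)
    have : f' x ^ 2 ≤ 8 * r := by
      rw [← div_le_iff₀ r0]; linarith
    nlinarith

lemma basic_bounds : ∃ C : ℝ, 0 < C ∧ ∀ ν f f', Sol ν f f' → ∀ x : ℝ, -(2 * ν ^ 2) ≤ x →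
    |f x| ≤ C / wt x ∧ |f' x| ≤ C * wt x ∧ |Vq ν x * f x| ≤ C * wt x ^ 3 ∧
    |f' x| / ν ≤ C / wt x ∧ |(1 + x / (2 * ν ^ 2)) * f x| ≤ C / wt x := by
  obtain ⟨C, hC, h⟩ := right_bound'
  refine ⟨C + 8, by positivity, ?_⟩
  intro ν f f' S x hx
  have hw := one_le_wt x
  have hw0 := wt_pos x
  have hw4 := wt_pow x
  have hν := S.hν
  have hν0 : 0 < ν := by linarith
  rcases le_total x (-2) with h2 | h2
  · obtain ⟨a, b, c, d⟩ := left_bound S hx h2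
    have a' : |f x| ≤ (C + 8) / wt x := a.trans (by gcongr; linarith)
    refine ⟨a', b.trans (by gcongr; linarith), ?_, ?_, ?_⟩
    · rw [abs_mul, ← abs_neg, abs_of_nonneg (a := -Vq ν x) (le_trans (by positivity) c)]
      calc -Vq ν x * |f x| ≤ wt x ^ 4 * (4 / wt x) := by gcongr
        _ = 4 * wt x ^ 3 := by field_simp
        _ ≤ _ := by gcongr; linarith
    · have : wt x ^ 2 ≤ 2 * ν := by
        apply le_of_pow_le_pow_left₀ (n := 2) (by norm_num) (by positivity)
        rw [abs_of_nonpos (by linarith)] at hw4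
        nlinarith
      rw [div_le_div_iff₀ hν0 hw0]
      calc |f' x| * wt x ≤ 4 * wt x * wt x := by gcongr
        _ = 4 * wt x ^ 2 := by ring
        _ ≤ 8 * ν := by linarith
        _ ≤ _ := by gcongr; linarith
    · rw [abs_mul]
      have e1 : -1 ≤ x / (2 * ν ^ 2) := by
        rw [le_div_iff₀ (by positivity)]; linarith
      have e2 : x / (2 * ν ^ 2) ≤ 0 := by
        apply div_nonpos_of_nonpos_of_nonneg; linarith; positivity
      have : |1 + x / (2 * ν ^ 2)| ≤ 1 := abs_le.2 ⟨by linarith, by linarith⟩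
      calc _ ≤ 1 * |f x| := by gcongr
        _ ≤ _ := by linarith
  · obtain ⟨a, b⟩ := h ν f f' S x h2
    have key : ∀ (A B : ℝ), |B| ≤ C / wt x ^ 16 → |A| ≤ wt x ^ 8 → |A * B| ≤ (C + 8) / wt x := by
      intro A B hB hA
      rw [abs_mul]
      calc |A| * |B| ≤ wt x ^ 8 * (C / wt x ^ 16) := by gcongr
        _ = C / wt x ^ 8 := by field_simp
        _ ≤ C / wt x := by
          gcongr; exact le_self_pow₀ hw (by norm_num)
        _ ≤ _ := by gcongr; linarith
    have w8 : (1:ℝ) ≤ wt x ^ 8 := one_le_pow₀ hw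
    have hle : (C + 8) / wt x ≤ (C + 8) * wt x := by
      rw [div_le_iff₀ hw0]; 
      have : 1 ≤ wt x * wt x := by nlinarith
      nlinarith
    have hle3 : (C + 8) / wt x ≤ (C + 8) * wt x ^ 3 := by
      refine hle.trans ?_
      gcongr; exact le_self_pow₀ hw (by norm_num)
    have e8 : wt x ^ 8 = (1 + |x|) ^ 2 := by rw [← hw4]; ring
    have v1 := key 1 (f x) a (by simpa using w8)
    have v2 := key 1 (f' x) b (by simpa using w8)
    rw [one_mul] at v1 v2
    refine ⟨v1, v2.trans hle, (key _ _ a ?_).trans hle3, ?_, key _ _ a ?_⟩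
    · rw [e8]; unfold Vq
      have e0 : 0 ≤ x ^ 2 / (4 * ν ^ 2) := by positivity
      have e3 : x ^ 2 / (4 * ν ^ 2) ≤ x ^ 2 := by
        rw [div_le_iff₀ (by positivity)]
        have : 1 ≤ 4 * ν ^ 2 := by nlinarith
        nlinarith [sq_nonneg x]
      have e1 : 1 / (2 * ν) ≤ 1 / 2 := by
        apply one_div_le_one_div_of_le <;> linarith
      have e2 : 0 < 1 / (2 * ν) := by positivity
      have := sq_abs x
      rw [abs_le]; constructor <;> nlinarith [neg_abs_le x, le_abs_self x, abs_nonneg x]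
    · refine le_trans ?_ v2
      exact div_le_self (abs_nonneg _) hν
    · rw [e8]
      have : |x / (2 * ν ^ 2)| ≤ |x| := by
        rw [abs_div]; apply div_le_self (abs_nonneg _)
        rw [abs_of_pos (by positivity)]; nlinarith
      have := abs_add_le 1 (x / (2 * ν ^ 2))
      rw [abs_one] at this
      nlinarith [abs_nonneg x]


lemma Sol.cont {ν : ℝ} {f f' : ℝ → ℝ} (S : Sol ν f f') : Continuous f :=
  continuous_iff_continuousAt.2 fun x => (S.hd x).continuousAt

lemma Sol.cont' {ν : ℝ} {f f' : ℝ → ℝ} (S : Sol ν f f') : Continuous f' :=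
  continuous_iff_continuousAt.2 fun x => (S.hd' x).continuousAt

lemma hasDerivAt_int {F : ℝ → ℝ} (hF : Continuous F) (a x : ℝ) :
    HasDerivAt (fun u => ∫ v in a..u, F v) (F x) x :=
  intervalIntegral.integral_hasDerivAt_right (hF.intervalIntegrable _ _)
    hF.aestronglyMeasurable.stronglyMeasurableAtFilter hF.continuousAt

lemma int_arctan {F : ℝ → ℝ} (hF : Continuous F) {C a b : ℝ} (hC : 0 ≤ C) (hab : a ≤ b)
    (h : ∀ u ∈ Icc a b, |F u| ≤ C / wt u ^ 8) : |∫ u in a..b, F u| ≤ 4 * C := by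
  have key := abs_sub_le_of_hasDerivAt (h := fun u => ∫ v in a..u, F v) (h' := F)
    (R := fun u => C * Real.arctan u) (R' := fun u => C * (1 / (1 + u ^ 2))) hab
    (fun u _ => hasDerivAt_int hF a u) (fun u _ => (Real.hasDerivAt_arctan u).const_mul C) ?_
  · simp only [intervalIntegral.integral_same, sub_zero] at key
    refine key.trans ?_
    have h1 := Real.arctan_lt_pi_div_two b
    have h2 := Real.neg_pi_div_two_lt_arctan a
    have := Real.pi_le_four
    rw [← mul_sub]; nlinarith
  · intro u hu
    refine (h u hu).trans ?_
    rw [div_eq_mul_one_div]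
    have e8 : wt u ^ 8 = (1 + |u|) ^ 2 := by rw [← wt_pow]; ring
    have : 1 + u ^ 2 ≤ wt u ^ 8 := by
      rw [e8, ← sq_abs u]; nlinarith [abs_nonneg u]
    gcongr

lemma wt_anti {a b : ℝ} (hab : |a| ≤ |b|) : wt a ≤ wt b := by
  unfold wt
  exact Real.rpow_le_rpow (by positivity) (by linarith) (by norm_num)

lemma int_left {ν : ℝ} {f f' : ℝ → ℝ} (S : Sol ν f f') {a b : ℝ} (h1 : -(2 * ν ^ 2) ≤ a)
    (hab : a ≤ b) (h2 : b ≤ -2) : |∫ u in a..b, f u| ≤ 200 / wt b ^ 3 := by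
  have hν := S.hν
  have V : ∀ u ∈ Icc a b, wt u ^ 4 / 4 ≤ -Vq ν u := fun u hu =>
    (left_bound S (h1.trans hu.1) (hu.2.trans h2)).2.2.1
  have V0 : ∀ u ∈ Icc a b, Vq ν u < 0 := fun u hu => by
    have := V u hu
    have : 0 < wt u ^ 4 := pow_pos (wt_pos u) 4
    linarith
  have P : ∀ u ∈ Icc a b, |f' u / Vq ν u| ≤ 16 / wt u ^ 3 := by
    intro u hu
    have hw := wt_pos u
    have hf := (left_bound S (h1.trans hu.1) (hu.2.trans h2)).2.1
    rw [abs_div, abs_of_neg (V0 u hu)]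
    calc |f' u| / -Vq ν u ≤ (4 * wt u) / (wt u ^ 4 / 4) := by
          gcongr; exact V u hu
      _ = _ := by field_simp; ring
  have key := abs_sub_le_of_hasDerivAt (h := fun u => (∫ v in a..u, f v) - f' u / Vq ν u)
    (h' := fun u => f' u * (1 + u / (2 * ν ^ 2)) / Vq ν u ^ 2)
    (R := fun u => (256 / 3) * (wt u ^ 3)⁻¹) (R' := fun u => 64 / wt u ^ 7) hab ?_ ?_ ?_
  · simp only [intervalIntegral.integral_same, zero_sub] at key
    have Pa := P a (left_mem_Icc.2 hab)
    have Pb := P b (right_mem_Icc.2 hab)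
    have wab : wt b ≤ wt a := wt_anti (by
      rw [abs_of_nonpos (by linarith), abs_of_nonpos (by linarith)]; linarith)
    have hwb := wt_pos b
    have hwa := wt_pos a
    have e1 : 16 / wt a ^ 3 ≤ 16 / wt b ^ 3 := by gcongr
    have e2 : 0 < (wt a ^ 3)⁻¹ := by positivity
    have e3 : 0 < (wt b ^ 3)⁻¹ := by positivity
    have t1 := abs_le.1 key
    have t2 := abs_le.1 Pa
    have t3 := abs_le.1 Pb
    simp only [div_eq_mul_inv] at *
    rw [abs_le]; constructor <;> linarith [t1.1, t1.2, t2.1, t2.2, t3.1, t3.2]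
  · intro u hu
    have hn := (V0 u hu).ne
    refine ((hasDerivAt_int S.cont a u).sub ((S.hd' u).div (Vq_hasDerivAt ν u) hn)).congr_deriv ?_
    field_simp; ring
  · intro u hu
    have hw := wt_pos u
    refine ((((wt_hasDerivAt_neg (x := u) (by linarith [hu.2])).pow 3).inv (by simp; positivity)).const_mul
      (256 / 3)).congr_deriv ?_
    simp only [Pi.pow_apply]
    field_simp; norm_num; ring
  · intro u hu
    have hw := wt_pos u
    have hf := (left_bound S (h1.trans hu.1) (hu.2.trans h2)).2.1
    have e1 : -1 ≤ u / (2 * ν ^ 2) := by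
      rw [le_div_iff₀ (by positivity)]; linarith [hu.1]
    have e2 : u / (2 * ν ^ 2) ≤ 0 := by
      apply div_nonpos_of_nonpos_of_nonneg; linarith [hu.2]; positivity
    have e3 : |1 + u / (2 * ν ^ 2)| ≤ 1 := abs_le.2 ⟨by linarith, by linarith⟩
    have e4 : (wt u ^ 4 / 4) ^ 2 ≤ Vq ν u ^ 2 := by
      rw [← neg_sq (Vq ν u)]; have := V u hu; gcongr
    rw [abs_div, abs_mul, abs_of_nonneg (sq_nonneg (Vq ν u))]
    calc _ ≤ (4 * wt u) * 1 / (wt u ^ 4 / 4) ^ 2 := by gcongr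
      _ = _ := by field_simp; norm_num

lemma int_right : ∃ C : ℝ, 0 < C ∧ ∀ ν f f', Sol ν f f' → ∀ a b : ℝ, -2 ≤ a → a ≤ b →
    |∫ u in a..b, f u| ≤ C ∧ |∫ u in a..b, (1 + u / (2 * ν ^ 2)) * f u| ≤ C := by
  obtain ⟨C, hC, h⟩ := right_bound'
  refine ⟨4 * C, by positivity, ?_⟩
  intro ν f f' S a b ha hab
  have hν := S.hν
  constructor
  · apply int_arctan S.cont hC.le hab
    intro u hu
    refine (h ν f f' S u (ha.trans hu.1)).1.trans ?_
    have := one_le_wt u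
    gcongr; norm_num
  · apply int_arctan (by have := S.cont; fun_prop) hC.le hab
    intro u hu
    have := (h ν f f' S u (ha.trans hu.1)).1
    have hw := one_le_wt u
    have h1 : |u / (2 * ν ^ 2)| ≤ |u| := by
      rw [abs_div]; apply div_le_self (abs_nonneg _)
      rw [abs_of_pos (by positivity)]; nlinarith
    have h2 := abs_add_le 1 (u / (2 * ν ^ 2))
    rw [abs_one] at h2
    have h3 : |1 + u / (2 * ν ^ 2)| ≤ wt u ^ 4 := by rw [wt_pow]; linarith
    rw [abs_mul]
    calc _ ≤ wt u ^ 4 * (C / wt u ^ 16) := by gcongr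
      _ = C / wt u ^ 12 := by field_simp
      _ ≤ _ := by gcongr; norm_num

lemma int_bound : ∃ C : ℝ, 0 < C ∧ ∀ ν f f', Sol ν f f' → ∀ a b : ℝ, -(2 * ν ^ 2) ≤ a →
    a ≤ b → |∫ u in a..b, f u| ≤ C / wt (min b 0) ^ 3 := by
  obtain ⟨C, hC, h⟩ := int_right
  refine ⟨3 * C + 600, by positivity, ?_⟩
  intro ν f f' S a b ha hab
  have hν := S.hν
  rcases le_total b (-2) with hb | hb
  · have := int_left S ha hab hb
    rw [min_eq_left (by linarith)]
    have hw := wt_pos b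
    refine this.trans ?_
    gcongr; linarith
  · have hw : wt (min b 0) ^ 3 ≤ 3 := by
      have h4 := wt_pow (min b 0)
      have h1 := one_le_wt (min b 0)
      have h2 : |min b 0| ≤ 2 := by
        rw [abs_of_nonpos (min_le_right _ _)]
        have : -2 ≤ min b 0 := le_min hb (by norm_num)
        linarith
      have : wt (min b 0) ^ 3 ≤ wt (min b 0) ^ 4 := pow_le_pow_right₀ h1 (by norm_num)
      linarith
    have hp := pow_pos (wt_pos (min b 0)) 3
    have main : |∫ u in a..b, f u| ≤ C + 200 := by
      rcases le_total a (-2) with h2 | h2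
      · have e := intervalIntegral.integral_add_adjacent_intervals
          (S.cont.intervalIntegrable (μ := volume) a (-2)) (S.cont.intervalIntegrable (-2) b)
        rw [← e]
        have e1 := int_left S ha h2 le_rfl
        have e2 := (h ν f f' S (-2) b le_rfl hb).1
        have e3 : 200 / wt (-2) ^ 3 ≤ 200 := div_le_self (by norm_num) (one_le_pow₀ (one_le_wt _))
        exact (abs_add_le _ _).trans (by linarith)
      · have e2 := (h ν f f' S a b h2 hab).1
        linarith
    rw [le_div_iff₀ hp]
    calc _ ≤ (C + 200) * 3 := by gcongr
      _ = _ := by ring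

lemma int_bound_abs : ∃ C : ℝ, 0 < C ∧ ∀ ν f f', Sol ν f f' → ∀ a b : ℝ, -(2 * ν ^ 2) ≤ a →
    -(2 * ν ^ 2) ≤ b → |∫ u in a..b, f u| ≤ C / wt (min (max a b) 0) ^ 3 := by
  obtain ⟨C, hC, h⟩ := int_bound
  refine ⟨C, hC, ?_⟩
  intro ν f f' S a b ha hb
  rcases le_total a b with hab | hab
  · rw [max_eq_right hab]; exact h ν f f' S a b ha hab
  · rw [max_eq_left hab, intervalIntegral.integral_symm, abs_neg]; exact h ν f f' S b a hb hab

lemma int_bound_const : ∃ C : ℝ, 0 < C ∧ ∀ ν f f', Sol ν f f' → ∀ a b : ℝ, -(2 * ν ^ 2) ≤ a →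
    -(2 * ν ^ 2) ≤ b → |∫ u in a..b, f u| ≤ C := by
  obtain ⟨C, hC, h⟩ := int_bound_abs
  refine ⟨C, hC, ?_⟩
  intro ν f f' S a b ha hb
  refine (h ν f f' S a b ha hb).trans ?_
  exact div_le_self hC.le (one_le_pow₀ (one_le_wt _))

/-- integral of `ψ_{n-1}` -/
lemma int_phi_bound : ∃ C : ℝ, 0 < C ∧ ∀ ν f f', Sol ν f f' → ∀ a b : ℝ, -(2 * ν ^ 2) ≤ a →
    -(2 * ν ^ 2) ≤ b → |∫ u in a..b, (f' u / ν + (1 + u / (2 * ν ^ 2)) * f u)| ≤ C := by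
  obtain ⟨C, hC, h⟩ := int_bound_const
  obtain ⟨D, hD, hR⟩ := int_right
  obtain ⟨B, hB, hb⟩ := basic_bounds
  refine ⟨2 * B + (2 * C + D), by positivity, ?_⟩
  have main : ∀ ν f f', Sol ν f f' → ∀ a b : ℝ, -(2 * ν ^ 2) ≤ a → a ≤ b →
      |∫ u in a..b, (f' u / ν + (1 + u / (2 * ν ^ 2)) * f u)| ≤ 2 * B + (2 * C + D) := by
    intro ν f f' S a b ha hab
    have hν := S.hν
    have hν0 : 0 < ν := by linarith
    have cg : Continuous fun u => (1 + u / (2 * ν ^ 2)) * f u := by have := S.cont; fun_prop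
    have cf : Continuous fun u => f' u / ν := by have := S.cont'; fun_prop
    rw [intervalIntegral.integral_add (cf.intervalIntegrable _ _) (cg.intervalIntegrable _ _)]
    have p1 : |∫ u in a..b, f' u / ν| ≤ 2 * B := by
      rw [intervalIntegral.integral_div,
        intervalIntegral.integral_eq_sub_of_hasDerivAt (fun u _ => S.hd u)
          (S.cont'.intervalIntegrable _ _), abs_div, abs_of_pos hν0]
      refine (div_le_self (abs_nonneg _) hν).trans ?_
      have ba := (hb ν f f' S a ha).1.trans (div_le_self hB.le (one_le_wt a))
      have bb := (hb ν f f' S b (ha.trans hab)).1.trans (div_le_self hB.le (one_le_wt b))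
      exact (abs_sub _ _).trans (by linarith)
    have left : ∀ c, a ≤ c → c ≤ 0 → |∫ u in a..c, (1 + u / (2 * ν ^ 2)) * f u| ≤ 2 * C := by
      intro c hac hc
      have key := abs_sub_le_of_hasDerivAt
        (h := fun u => (∫ v in a..u, (1 + v / (2 * ν ^ 2)) * f v) - (1 + u / (2 * ν ^ 2)) * ∫ v in a..u, f v)
        (h' := fun u => -(1 / (2 * ν ^ 2) * ∫ v in a..u, f v))
        (R := fun u => u * (C / (2 * ν ^ 2))) (R' := fun u => C / (2 * ν ^ 2)) hac ?_ ?_ ?_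
      · simp only [intervalIntegral.integral_same, mul_zero, sub_zero] at key
        have e1 : -1 ≤ c / (2 * ν ^ 2) := by
          rw [le_div_iff₀ (by positivity)]; linarith
        have e2 : c / (2 * ν ^ 2) ≤ 0 := by
          apply div_nonpos_of_nonpos_of_nonneg; linarith; positivity
        have e3 : |1 + c / (2 * ν ^ 2)| ≤ 1 := abs_le.2 ⟨by linarith, by linarith⟩
        have e4 : |(1 + c / (2 * ν ^ 2)) * ∫ v in a..c, f v| ≤ C := by
          rw [abs_mul]
          have := mul_le_mul e3 (h ν f f' S a c ha (ha.trans hac)) (abs_nonneg _) zero_le_one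
          linarith
        have e5 : c * (C / (2 * ν ^ 2)) - a * (C / (2 * ν ^ 2)) ≤ C := by
          rw [← sub_mul, mul_div_assoc', div_le_iff₀ (by positivity)]
          nlinarith
        have t1 := abs_le.1 key
        have t2 := abs_le.1 e4
        rw [abs_le]; constructor <;> linarith [t1.1, t1.2, t2.1, t2.2]
      · intro u hu
        have e := ((hasDerivAt_id u).div_const (2 * ν ^ 2)).const_add 1
        refine ((hasDerivAt_int cg a u).sub (e.mul (hasDerivAt_int S.cont a u))).congr_deriv ?_
        simp
      · intro u hu
        exact (hasDerivAt_mul_const _)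
      · intro u hu
        have := h ν f f' S a u ha (ha.trans hu.1)
        calc _ = 1 / (2 * ν ^ 2) * |∫ v in a..u, f v| := by
              rw [abs_neg, abs_mul, abs_of_pos (by positivity : 0 < 1 / (2 * ν ^ 2))]
          _ ≤ 1 / (2 * ν ^ 2) * C := by gcongr
          _ = _ := by ring
    have p2 : |∫ u in a..b, (1 + u / (2 * ν ^ 2)) * f u| ≤ 2 * C + D := by
      rcases le_total b 0 with h0 | h0
      · linarith [left b hab h0]
      · rcases le_total a 0 with h1 | h1
        · rw [← intervalIntegral.integral_add_adjacent_intervals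
            (cg.intervalIntegrable (μ := volume) a 0) (cg.intervalIntegrable 0 b)]
          have := (hR ν f f' S 0 b (by norm_num) h0).2
          have := left 0 h1 le_rfl
          exact (abs_add_le _ _).trans (by linarith)
        · have := (hR ν f f' S a b (by linarith) hab).2
          linarith
    exact (abs_add_le _ _).trans (by linarith)
  intro ν f f' S a b ha hb'
  rcases le_total a b with hab | hab
  · exact main ν f f' S a b ha hab
  · rw [intervalIntegral.integral_symm, abs_neg]; exact main ν f f' S b a hb' hab


lemma prim_bound : ∃ C : ℝ, 0 < C ∧ ∀ ν f f', Sol ν f f' → ∀ x u : ℝ, -(2 * ν ^ 2) ≤ x →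
    -(2 * ν ^ 2) ≤ u → |f x * f u - f' x * ∫ v in x..u, f v| ≤ C * wt (u - x) ^ 3 / wt x ^ 2 := by
  obtain ⟨C, hC, h⟩ := int_bound_abs
  obtain ⟨D, hD, hR⟩ := right_bound'
  obtain ⟨B, hB, hb⟩ := basic_bounds
  refine ⟨B ^ 2 + (B * C + D * C), by positivity, ?_⟩
  intro ν f f' S x u hx hu
  have hw := one_le_wt x
  have hs := one_le_wt (u - x)
  have hwu := one_le_wt u
  have p1 : |f x * f u| ≤ B ^ 2 * (wt (u - x) ^ 3 / wt x ^ 2) := by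
    rw [abs_mul]
    have e : wt x ≤ wt u * wt (u - x) := wt_peetre (by
      have := abs_sub u (u - x); simpa using this)
    have h1 := (hb ν f f' S x hx).1
    have h2 := (hb ν f f' S u hu).1
    calc |f x| * |f u| ≤ (B / wt x) * (B / wt u) := by gcongr
      _ ≤ (B / wt x) * (B / (wt x / wt (u - x))) := by
        gcongr; rw [div_le_iff₀ (by positivity)]; exact e
      _ = B ^ 2 * (wt (u - x) / wt x ^ 2) := by field_simp
      _ ≤ _ := by gcongr; exact le_self_pow₀ hs (by norm_num)
  have p2 : |f' x * ∫ v in x..u, f v| ≤ (B * C + D * C) * (wt (u - x) ^ 3 / wt x ^ 2) := by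
    rw [abs_mul]
    have hI := h ν f f' S x u hx hu
    have hpos : 0 ≤ wt (u - x) ^ 3 / wt x ^ 2 := by positivity
    rcases le_total x 0 with h0 | h0
    · set z := min (max x u) 0 with hz
      have hwz := one_le_wt z
      have e : wt x ≤ wt z * wt (u - x) := wt_peetre (by
        have h1 : z ≤ x + |u - x| := by
          apply (min_le_left _ _).trans; apply max_le
          · linarith [abs_nonneg (u - x)]
          · linarith [le_abs_self (u - x)]
        rw [abs_of_nonpos h0, abs_of_nonpos (min_le_right _ _ : z ≤ 0)]
        linarith)
      have h1 := (hb ν f f' S x hx).2.1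
      have e3 : (wt x / wt (u - x)) ^ 3 ≤ wt z ^ 3 := by
        gcongr; rw [div_le_iff₀ (by positivity)]; exact e
      calc _ ≤ (B * wt x) * (C / wt z ^ 3) := by gcongr
        _ ≤ (B * wt x) * (C / (wt x / wt (u - x)) ^ 3) := by gcongr
        _ = B * C * (wt (u - x) ^ 3 / wt x ^ 2) := by field_simp
        _ ≤ _ := by nlinarith [mul_pos hD hC]
    · have h1 := (hR ν f f' S x (by linarith)).2
      have hI' : |∫ v in x..u, f v| ≤ C := hI.trans (div_le_self hC.le (one_le_pow₀ (one_le_wt _)))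
      calc _ ≤ (D / wt x ^ 16) * C := by gcongr
        _ = D * C * (1 / wt x ^ 16) := by ring
        _ ≤ D * C * (wt (u - x) ^ 3 / wt x ^ 2) := by
          gcongr
          · exact one_le_pow₀ hs
          · norm_num
        _ ≤ _ := by nlinarith [mul_pos hB hC]
  calc _ ≤ |f x * f u| + |f' x * ∫ v in x..u, f v| := abs_sub _ _
    _ ≤ _ := by rw [mul_div_assoc, add_mul]; linarith

lemma wt_cube_le {s : ℝ} (h0 : 0 ≤ s) : wt s ^ 3 ≤ 1 + s := by
  have := wt_pow s
  rw [abs_of_nonneg h0] at this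
  rw [← this]
  exact pow_le_pow_right₀ (one_le_wt s) (by norm_num)

lemma osc_int {D g g' : ℝ → ℝ} {w C T : ℝ} (hw : 1 ≤ w) (hC : 0 ≤ C) (hT : 0 ≤ T)
    (hD : Continuous D) (hg : ∀ s, HasDerivAt g (g' s) s) (hDg : ∀ s, D s * s = g' s)
    (near : ∀ s ∈ Icc 0 T, s ≤ 1 → |D s| ≤ C * w ^ 2)
    (far : ∀ s ∈ Icc 0 T, |g s| ≤ C * wt s ^ 3 / w ^ 2) : |∫ s in (0:ℝ)..T, D s| ≤ 20 * C := by
  set δ := 1 / w ^ 2 with hδ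
  have hw2 : 1 ≤ w ^ 2 := one_le_pow₀ hw
  have δ0 : 0 < δ := by positivity
  have δ1 : δ ≤ 1 := by rw [hδ]; exact div_le_self zero_le_one hw2
  have δw : δ * w ^ 2 = 1 := by rw [hδ]; field_simp
  have nearI : ∀ t, 0 ≤ t → t ≤ T → t ≤ δ → |∫ s in (0:ℝ)..t, D s| ≤ C := by
    intro t h0 h1 h2
    have := intervalIntegral.norm_integral_le_of_norm_le_const (a := 0) (b := t) (f := D) (C := C * w ^ 2) ?_
    · rw [Real.norm_eq_abs, sub_zero, abs_of_nonneg h0] at this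
      refine this.trans ?_
      have e : C * w ^ 2 * t ≤ C * w ^ 2 * δ := by gcongr
      refine e.trans (le_of_eq ?_)
      rw [mul_assoc, mul_comm (w ^ 2), δw, mul_one]
    · intro s hs
      rw [uIoc_of_le h0] at hs
      exact near s ⟨hs.1.le, hs.2.trans h1⟩ (by linarith [hs.2])
  rcases le_total T δ with hTd | hTd
  · have := nearI T hT le_rfl hTd
    linarith
  · have n := nearI δ δ0.le hTd le_rfl
    rw [← intervalIntegral.integral_add_adjacent_intervals
      (hD.intervalIntegrable (μ := volume) 0 δ) (hD.intervalIntegrable δ T)]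
    have bd : ∀ s ∈ Icc δ T, |g s / s| ≤ 2 * C ∧ wt s ^ 3 / s ≤ 2 * w ^ 2 := by
      intro s hs
      have s0 : 0 < s := lt_of_lt_of_le δ0 hs.1
      have h1 : wt s ^ 3 / s ≤ 2 * w ^ 2 := by
        rw [div_le_iff₀ s0]
        have := wt_cube_le s0.le
        have h2 : 1 ≤ s * w ^ 2 := by rw [← δw]; gcongr; exact hs.1
        nlinarith
      refine ⟨?_, h1⟩
      have h2 := far s ⟨s0.le, hs.2⟩
      rw [abs_div, abs_of_pos s0]
      calc |g s| / s ≤ (C * wt s ^ 3 / w ^ 2) / s := by gcongr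
        _ = C / w ^ 2 * (wt s ^ 3 / s) := by ring
        _ ≤ C / w ^ 2 * (2 * w ^ 2) := by gcongr
        _ = 2 * C := by field_simp
    have key := abs_sub_le_of_hasDerivAt
      (h := fun u => (∫ v in δ..u, D v) - g u / u) (h' := fun u => g u / u ^ 2)
      (R := fun u => -(4 * C / w ^ 2) * (wt u ^ 3 / u))
      (R' := fun u => (C / w ^ 2) * ((4 + u) / (wt u * u ^ 2))) hTd ?_ ?_ ?_
    · simp only [intervalIntegral.integral_same, zero_sub] at key
      have bδ := bd δ ⟨le_rfl, hTd⟩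
      have bT := bd T ⟨hTd, le_rfl⟩
      have e1 : 4 * C / w ^ 2 * (wt δ ^ 3 / δ) ≤ 8 * C := by
        calc _ ≤ 4 * C / w ^ 2 * (2 * w ^ 2) := by gcongr; exact bδ.2
          _ = _ := by field_simp; ring
      have e2 : 0 ≤ 4 * C / w ^ 2 * (wt T ^ 3 / T) := by have := wt_pos T; positivity
      have t1 := abs_le.1 key
      have t2 := abs_le.1 bδ.1
      have t3 := abs_le.1 bT.1
      have t4 := abs_le.1 n
      rw [abs_le]; constructor <;> linarith [t1.1, t1.2, t2.1, t2.2, t3.1, t3.2, t4.1, t4.2]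
    · intro u hu
      have u0 : 0 < u := lt_of_lt_of_le δ0 hu.1
      refine ((hasDerivAt_int hD δ u).sub ((hg u).div (hasDerivAt_id u) u0.ne')).congr_deriv ?_
      simp only [id]
      rw [← hDg u]; field_simp; ring
    · intro u hu
      have u0 : 0 < u := lt_of_lt_of_le δ0 hu.1
      have hwu := wt_pos u
      refine ((((wt_hasDerivAt_pos u0).pow 3).div (hasDerivAt_id u) u0.ne').const_mul _).congr_deriv ?_
      have h4 := wt_pow u
      rw [abs_of_pos u0] at h4
      simp only [id, Pi.pow_apply]
      have h5 : u = wt u ^ 4 - 1 := by linarith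
      field_simp
      push_cast
      linear_combination (4 * C * wt u ^ 2) * h4
    · intro u hu
      have u0 : 0 < u := lt_of_lt_of_le δ0 hu.1
      have hwu := wt_pos u
      have h4 := wt_pow u
      rw [abs_of_pos u0] at h4
      rw [abs_div, abs_of_pos (by positivity : 0 < u ^ 2)]
      calc |g u| / u ^ 2 ≤ (C * wt u ^ 3 / w ^ 2) / u ^ 2 := by
            gcongr; exact far u ⟨u0.le, hu.2⟩
        _ = (C / w ^ 2) * (wt u ^ 4 / (wt u * u ^ 2)) := by field_simp
        _ ≤ _ := by rw [h4]; gcongr; norm_num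

/-- numerator of the kernel -/
def Nf (f f' : ℝ → ℝ) (x u : ℝ) : ℝ := f x * f' u - f' x * f u

lemma Nf_hasDerivAt {ν : ℝ} {f f' : ℝ → ℝ} (S : Sol ν f f') (x u : ℝ) :
    HasDerivAt (Nf f f' x) (f x * (Vq ν u * f u) - f' x * f' u) u :=
  ((S.hd' u).const_mul (f x)).sub ((S.hd u).const_mul (f' x))

lemma dslope_cont {ν : ℝ} {f f' : ℝ → ℝ} (S : Sol ν f f') (x : ℝ) :
    Continuous (dslope (Nf f f' x) x) := by
  rw [continuous_iff_continuousAt]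
  intro u
  rcases eq_or_ne u x with h | h
  · subst h; exact continuousAt_dslope_same.2 (Nf_hasDerivAt S u u).differentiableAt
  · exact (continuousAt_dslope_of_ne h).2 (Nf_hasDerivAt S x u).continuousAt

lemma dslope_bound : ∃ C : ℝ, 0 < C ∧ ∀ ν f f', Sol ν f f' → ∀ x u : ℝ, -(2 * ν ^ 2) ≤ x →
    -(2 * ν ^ 2) ≤ u → |u - x| ≤ 1 → |dslope (Nf f f' x) x u| ≤ C * wt x ^ 2 := by
  obtain ⟨B, hB, hb⟩ := basic_bounds
  refine ⟨10 * B ^ 2, by positivity, ?_⟩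
  intro ν f f' S x u hx hu hux
  have hw := one_le_wt x
  have hd : ∀ v, -(2 * ν ^ 2) ≤ v → |v - x| ≤ 1 →
      |f x * (Vq ν v * f v) - f' x * f' v| ≤ 10 * B ^ 2 * wt x ^ 2 := by
    intro v hv hvx
    have hwv := one_le_wt v
    have e : wt v ≤ 2 * wt x := by
      have e1 : wt v ≤ wt x * wt (v - x) := wt_peetre (by
        have := abs_add_le x (v - x); simpa using this)
      have e2 : wt (v - x) ≤ 2 := by
        have h4 := wt_pow (v - x)
        have h1 := le_self_pow₀ (one_le_wt (v - x)) (by norm_num : 4 ≠ 0)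
        linarith
      nlinarith
    have h1 := hb ν f f' S x hx
    have h2 := hb ν f f' S v hv
    calc _ ≤ |f x * (Vq ν v * f v)| + |f' x * f' v| := abs_sub _ _
      _ = |f x| * |Vq ν v * f v| + |f' x| * |f' v| := by rw [abs_mul (f x), abs_mul (f' x)]
      _ ≤ (B / wt x) * (B * wt v ^ 3) + (B * wt x) * (B * wt v) := by
        have := h1.1; have := h1.2.1; have := h2.2.1; have := h2.2.2.1
        gcongr
      _ ≤ (B / wt x) * (B * (2 * wt x) ^ 3) + (B * wt x) * (B * (2 * wt x)) := by gcongr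
      _ = _ := by field_simp; ring
  rcases eq_or_ne u x with h | h
  · subst h
    rw [dslope_same, (Nf_hasDerivAt S u u).deriv]
    exact hd u hu (by simp)
  · rw [dslope_of_ne _ h, slope_def_field, abs_div, div_le_iff₀ (abs_pos.2 (sub_ne_zero.2 h))]
    have := (convex_uIcc x u).norm_image_sub_le_of_norm_hasDerivWithin_le
      (fun v _ => (Nf_hasDerivAt S x v).hasDerivWithinAt) (C := 10 * B ^ 2 * wt x ^ 2) ?_
      left_mem_uIcc right_mem_uIcc
    · simpa [Real.norm_eq_abs] using this
    · intro v hv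
      apply hd v
      · rcases le_total x u with h | h
        · rw [uIcc_of_le h] at hv; exact hx.trans hv.1
        · rw [uIcc_of_ge h] at hv; exact hu.trans hv.1
      · exact (abs_sub_left_of_mem_uIcc hv).trans hux

lemma kernel_int : ∃ C : ℝ, 0 < C ∧ ∀ ν f f', Sol ν f f' → ∀ x y : ℝ, -(2 * ν ^ 2) ≤ x →
    -(2 * ν ^ 2) ≤ y → |∫ u in x..y, dslope (Nf f f' x) x u| ≤ C := by
  obtain ⟨C, hC, h⟩ := prim_bound
  obtain ⟨D, hD, hd⟩ := dslope_bound
  refine ⟨20 * (C + D), by positivity, ?_⟩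
  intro ν f f' S x y hx hy
  have hw := one_le_wt x
  have gd : ∀ u, HasDerivAt (fun u => f x * f u - f' x * ∫ v in x..u, f v) (Nf f f' x u) u := by
    intro u
    exact ((S.hd u).const_mul (f x)).sub ((hasDerivAt_int S.cont x u).const_mul (f' x))
  have hN : ∀ u, dslope (Nf f f' x) x u * (u - x) = Nf f f' x u := by
    intro u
    have := sub_smul_dslope (Nf f f' x) x u
    rw [smul_eq_mul] at this
    rw [mul_comm, this]; simp [Nf]; ring
  have dc := dslope_cont S x
  rcases le_total x y with hxy | hxy
  · have key := osc_int (D := fun s => dslope (Nf f f' x) x (x + s))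
      (g := fun s => f x * f (x + s) - f' x * ∫ v in x..(x + s), f v)
      (g' := fun s => Nf f f' x (x + s)) (w := wt x) (C := C + D) (T := y - x) hw (by positivity)
      (by linarith) (dc.comp (by fun_prop)) ?_ ?_ ?_ ?_
    · simpa [intervalIntegral.integral_comp_add_left] using key
    · intro s
      have := (HasDerivAt.comp s (gd (x + s)) ((hasDerivAt_id s).const_add x))
      exact this.congr_deriv (by simp)
    · intro s
      have := hN (x + s)
      simpa using this
    · intro s hs h1
      refine (hd ν f f' S x (x + s) hx (by linarith [hs.1]) (by simpa [abs_of_nonneg hs.1] using h1)).trans ?_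
      gcongr; linarith
    · intro s hs
      have := h ν f f' S x (x + s) hx (by linarith [hs.1])
      rw [add_sub_cancel_left] at this
      refine this.trans ?_
      have := wt_pos s
      gcongr; linarith
  · have key := osc_int (D := fun s => -dslope (Nf f f' x) x (x - s))
      (g := fun s => -(f x * f (x - s) - f' x * ∫ v in x..(x - s), f v))
      (g' := fun s => Nf f f' x (x - s)) (w := wt x) (C := C + D) (T := x - y) hw (by positivity)
      (by linarith) (dc.comp (by fun_prop)).neg ?_ ?_ ?_ ?_
    · rw [intervalIntegral.integral_neg, abs_neg,
        intervalIntegral.integral_comp_sub_left (fun u => dslope (Nf f f' x) x u)] at key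
      rw [intervalIntegral.integral_symm, abs_neg]
      simpa using key
    · intro s
      have := (HasDerivAt.comp s (gd (x - s)) ((hasDerivAt_id s).const_sub x)).neg
      exact this.congr_deriv (by simp)
    · intro s
      have := hN (x - s)
      rw [← this]; ring
    · intro s hs h1
      rw [abs_neg]
      refine (hd ν f f' S x (x - s) hx (by linarith [hs.2]) (by simpa [abs_of_nonneg hs.1] using h1)).trans ?_
      gcongr; linarith
    · intro s hs
      have := h ν f f' S x (x - s) hx (by linarith [hs.2])
      rw [show x - s - x = -s by ring, wt_neg] at this
      rw [abs_neg]
      refine this.trans ?_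
      have := wt_pos s
      gcongr; linarith


/-- real Hermite polynomial -/
noncomputable def HP (n : ℕ) : Polynomial ℝ := (Polynomial.hermite n).map (Int.castRingHom ℝ)

lemma HP_succ (n : ℕ) : HP (n + 1) = Polynomial.X * HP n - Polynomial.derivative (HP n) := by
  unfold HP
  rw [Polynomial.hermite_succ, Polynomial.derivative_map]; simp

lemma HP_deriv (n : ℕ) : Polynomial.derivative (HP (n + 1)) = Polynomial.C ((n : ℝ) + 1) * HP n := by
  induction n with
  | zero => simp [HP]
  | succ n ih =>
    rw [HP_succ (n + 1)]
    rw [Polynomial.derivative_sub, Polynomial.derivative_mul, ih, Polynomial.derivative_C_mul,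
      Polynomial.derivative_X, HP_succ n]
    push_cast
    simp only [Polynomial.C_add, Polynomial.C_1]
    ring

lemma HP_ode (n : ℕ) : Polynomial.derivative (Polynomial.derivative (HP n)) =
    Polynomial.X * Polynomial.derivative (HP n) - Polynomial.C (n : ℝ) * HP n := by
  have h := HP_deriv n
  rw [HP_succ n, Polynomial.derivative_sub, Polynomial.derivative_mul, Polynomial.derivative_X] at h
  simp only [Polynomial.C_add, Polynomial.C_1] at h
  linear_combination -h

lemma hermiteP_eq (n : ℕ) (x : ℝ) : hermiteP n x = (HP n).eval x := by
  have h := Polynomial.deriv_gaussian_eq_hermite_mul_gaussian n x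
  unfold hermiteP HP
  rw [iteratedDeriv_eq_iterate]
  simp only [neg_div]
  rw [h, Polynomial.eval_map, Polynomial.aeval_def, Real.exp_neg]
  have : ((-1:ℝ) ^ n) * (-1) ^ n = 1 := by rw [← mul_pow]; norm_num
  have e : algebraMap ℤ ℝ = Int.castRingHom ℝ := rfl
  rw [e]
  field_simp
  linear_combination (Polynomial.eval₂ (Int.castRingHom ℝ) x (Polynomial.hermite n)) * this

/-- normalization -/
noncomputable def cn (n : ℕ) : ℝ := (2 * Real.pi) ^ (-(1:ℝ)/4) * ((n.factorial : ℝ)) ^ (-(1:ℝ)/2)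

/-- derivative of `osc` -/
noncomputable def oscD (n : ℕ) (t : ℝ) : ℝ :=
  cn n * Real.exp (-t ^ 2 / 4) * ((Polynomial.derivative (HP n)).eval t - t / 2 * (HP n).eval t)

lemma osc_eq (n : ℕ) (t : ℝ) : osc n t = cn n * Real.exp (-t ^ 2 / 4) * (HP n).eval t := by
  unfold osc cn; rw [hermiteP_eq]

lemma gauss_deriv (t : ℝ) : HasDerivAt (fun t : ℝ => Real.exp (-t ^ 2 / 4))
    (Real.exp (-t ^ 2 / 4) * (-t / 2)) t := by
  refine (((hasDerivAt_id t).pow 2).neg.div_const 4).exp.congr_deriv ?_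
  simp; ring

lemma osc_deriv (n : ℕ) (t : ℝ) : HasDerivAt (osc n) (oscD n t) t := by
  have e : osc n = fun t => cn n * Real.exp (-t ^ 2 / 4) * (HP n).eval t := funext (osc_eq n)
  rw [e]
  refine (((gauss_deriv t).const_mul (cn n)).mul ((HP n).hasDerivAt t)).congr_deriv ?_
  unfold oscD; ring

lemma oscD_deriv (n : ℕ) (t : ℝ) :
    HasDerivAt (oscD n) ((t ^ 2 / 4 - n - 1 / 2) * osc n t) t := by
  have h := ((gauss_deriv t).const_mul (cn n)).mul
    (((Polynomial.derivative (HP n)).hasDerivAt t).sub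
      (((hasDerivAt_id t).div_const 2).mul ((HP n).hasDerivAt t)))
  refine HasDerivAt.congr_deriv (f := oscD n) h ?_
  rw [osc_eq, HP_ode]
  simp; ring

lemma cn_pos (n : ℕ) : 0 < cn n := by unfold cn; positivity

lemma cn_sq (n : ℕ) : cn n ^ 2 * √(2 * Real.pi) * n.factorial = 1 := by
  unfold cn
  rw [mul_pow, ← Real.rpow_natCast, ← Real.rpow_natCast, ← Real.rpow_mul (by positivity),
    ← Real.rpow_mul (by positivity), Real.sqrt_eq_rpow]
  norm_num
  rw [Real.rpow_neg (by positivity), Real.rpow_neg (by positivity), Real.rpow_one]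
  have h1 : (2 * Real.pi) ^ ((1:ℝ) / 2) ≠ 0 := by positivity
  have h2 : (n.factorial : ℝ) ≠ 0 := by positivity
  field_simp

lemma cn_succ (n : ℕ) : cn (n + 1) * ((n : ℝ) + 1) = √((n : ℝ) + 1) * cn n := by
  have a := cn_sq n
  have b := cn_sq (n + 1)
  rw [Nat.factorial_succ] at b
  push_cast at b
  have h0 := cn_pos n
  have h1 := cn_pos (n + 1)
  have hs : √((n : ℝ) + 1) ^ 2 = (n : ℝ) + 1 := Real.sq_sqrt (by positivity)
  have hsp : 0 < √((n : ℝ) + 1) := by positivity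
  have hq : √(2 * Real.pi) ≠ 0 := by positivity
  have hf : (n.factorial : ℝ) ≠ 0 := by positivity
  have e : cn (n + 1) ^ 2 * ((n : ℝ) + 1) = cn n ^ 2 := by
    have : (cn (n + 1) ^ 2 * ((n : ℝ) + 1)) * (√(2 * Real.pi) * n.factorial)
      = cn n ^ 2 * (√(2 * Real.pi) * n.factorial) := by linear_combination b - a
    exact mul_right_cancel₀ (mul_ne_zero hq hf) this
  refine (sq_eq_sq₀ (by positivity) (by positivity)).1 ?_
  rw [mul_pow, mul_pow, hs]
  linear_combination ((n : ℝ) + 1) * e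

lemma osc_ladder (n : ℕ) (t : ℝ) :
    oscD (n + 1) t = √((n : ℝ) + 1) * osc n t - t / 2 * osc (n + 1) t := by
  rw [osc_eq, osc_eq, oscD, HP_deriv]
  simp only [Polynomial.eval_mul, Polynomial.eval_C]
  linear_combination (Real.exp (-t ^ 2 / 4) * (HP n).eval t) * cn_succ n

lemma HP_comp_neg (n : ℕ) : (HP n).comp (-Polynomial.X) = Polynomial.C ((-1) ^ n) * HP n := by
  induction n with
  | zero => simp [HP]
  | succ n ih =>
    have h := congrArg Polynomial.derivative ih
    rw [Polynomial.derivative_comp, Polynomial.derivative_C_mul] at h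
    rw [HP_succ]
    simp only [Polynomial.derivative_neg, Polynomial.derivative_X, Polynomial.sub_comp,
      Polynomial.mul_comp, Polynomial.X_comp] at h ⊢
    rw [ih, pow_succ]
    simp only [Polynomial.C_mul, Polynomial.C_neg, Polynomial.C_1] at h ⊢
    linear_combination h

lemma osc_neg (n : ℕ) (hn : Even n) (t : ℝ) : osc n (-t) = osc n t := by
  have h := congrArg (Polynomial.eval t) (HP_comp_neg n)
  rw [hn.neg_one_pow] at h
  simp at h
  rw [osc_eq, osc_eq, h]; simp

lemma HP_zero_val (m : ℕ) : (Polynomial.derivative (HP (2 * m))).eval 0 = 0 ∧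
    ((HP (2 * m)).eval 0) ^ 4 * (2 * m + 1) ≤ ((2 * m).factorial : ℝ) ^ 2 := by
  induction m with
  | zero => simp [HP]
  | succ m ih =>
    obtain ⟨h1, h2⟩ := ih
    have e : 2 * (m + 1) = 2 * m + 1 + 1 := by ring
    have e1 : (HP (2 * m + 1)).eval 0 = 0 := by rw [HP_succ]; simp [h1]
    have e2 : (HP (2 * m + 1 + 1)).eval 0 = - ((2 * m + 1) * (HP (2 * m)).eval 0) := by
      rw [HP_succ, HP_deriv]; simp
    rw [e]
    constructor
    · rw [HP_deriv]; simp [e1]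
    · rw [e2, Nat.factorial_succ, Nat.factorial_succ]
      push_cast
      set p := (HP (2 * m)).eval 0
      set F := ((2 * m).factorial : ℝ)
      have hm : (0:ℝ) ≤ m := by positivity
      calc (-((2 * (m:ℝ) + 1) * p)) ^ 4 * (2 * (m + 1) + 1)
          = (p ^ 4 * (2 * m + 1)) * ((2 * m + 1) ^ 2 * ((2 * m + 1) * (2 * m + 3))) := by ring
        _ ≤ F ^ 2 * ((2 * m + 1) ^ 2 * (2 * m + 2) ^ 2) := by
            gcongr; nlinarith
        _ = _ := by ring

lemma oscD_zero (n : ℕ) (hn : Even n) : oscD n 0 = 0 := by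
  obtain ⟨m, rfl⟩ := hn
  rw [← two_mul]
  simp [oscD, (HP_zero_val m).1]

lemma osc_zero (n : ℕ) (hn : Even n) : (osc n 0 ^ 2) ^ 2 * n ≤ 1 := by
  obtain ⟨m, rfl⟩ := hn
  rw [← two_mul, osc_eq]
  have h := (HP_zero_val m).2
  have a := cn_sq (2 * m)
  set p := (HP (2 * m)).eval 0
  have hF : 0 < ((2 * m).factorial : ℝ) := by positivity
  set F := ((2 * m).factorial : ℝ)
  have hq : 1 ≤ √(2 * Real.pi) := by
    rw [Real.one_le_sqrt]; linarith [Real.pi_gt_three]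
  have hc : cn (2 * m) ^ 2 * F ≤ 1 := by
    calc cn (2 * m) ^ 2 * F = cn (2 * m) ^ 2 * 1 * F := by ring
      _ ≤ cn (2 * m) ^ 2 * √(2 * Real.pi) * F := by gcongr
      _ = 1 := a
  have hc0 : 0 ≤ cn (2 * m) ^ 2 * F := by positivity
  simp only [ne_eq, OfNat.ofNat_ne_zero, not_false_eq_true, zero_pow, neg_zero, zero_div,
    Real.exp_zero, mul_one]
  push_cast
  calc ((cn (2 * m) * p) ^ 2) ^ 2 * (2 * (m:ℝ))
      ≤ cn (2 * m) ^ 4 * (p ^ 4 * (2 * m + 1)) := by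
        have : 0 ≤ cn (2 * m) ^ 4 * p ^ 4 := by positivity
        nlinarith
    _ ≤ cn (2 * m) ^ 4 * F ^ 2 := by gcongr
    _ = (cn (2 * m) ^ 2 * F) ^ 2 := by ring
    _ ≤ 1 := by nlinarith

lemma poly_gauss (P : Polynomial ℝ) :
    Tendsto (fun t : ℝ => P.eval t * Real.exp (-t ^ 2 / 2)) atTop (nhds 0) := by
  have h := P.tendsto_div_exp_atTop
  have h' := (h.abs).mul_const (Real.exp 1)
  simp only [abs_zero, zero_mul] at h'
  apply squeeze_zero_norm _ h'
  intro t
  rw [Real.norm_eq_abs, abs_mul, abs_div, Real.abs_exp, Real.abs_exp, div_mul_eq_mul_div,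
    mul_div_assoc, ← Real.exp_sub]
  gcongr
  nlinarith [sq_nonneg (t - 1)]

lemma osc_lim1 (n : ℕ) : Tendsto (fun t => osc n t * oscD n t) atTop (nhds 0) := by
  have h := poly_gauss (Polynomial.C (cn n ^ 2) * HP n *
    (Polynomial.derivative (HP n) - Polynomial.C (1/2) * Polynomial.X * HP n))
  refine h.congr fun t => ?_
  rw [osc_eq, oscD]
  have e : Real.exp (-t ^ 2 / 2) = Real.exp (-t ^ 2 / 4) * Real.exp (-t ^ 2 / 4) := by
    rw [← Real.exp_add]; ring_nf
  rw [e]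
  simp only [Polynomial.eval_mul, Polynomial.eval_sub, Polynomial.eval_C, Polynomial.eval_X]
  ring

lemma osc_lim2 (n : ℕ) : Tendsto (fun t => oscD n t ^ 2 - (t ^ 2 / 4 - n - 1 / 2) * osc n t ^ 2)
    atTop (nhds 0) := by
  have h := poly_gauss (Polynomial.C (cn n ^ 2) * (
    (Polynomial.derivative (HP n) - Polynomial.C (1/2) * Polynomial.X * HP n) ^ 2 -
      (Polynomial.C (1/4) * Polynomial.X ^ 2 - Polynomial.C (n + 1/2 : ℝ)) * HP n ^ 2))
  refine h.congr fun t => ?_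
  rw [osc_eq, oscD]
  have e : Real.exp (-t ^ 2 / 2) = Real.exp (-t ^ 2 / 4) * Real.exp (-t ^ 2 / 4) := by
    rw [← Real.exp_add]; ring_nf
  rw [e]
  simp only [Polynomial.eval_mul, Polynomial.eval_sub, Polynomial.eval_C, Polynomial.eval_X,
    Polynomial.eval_pow]
  ring


/-- twelfth root of `n` -/
noncomputable def pn (n : ℕ) : ℝ := (n : ℝ) ^ ((1:ℝ) / 12)

/-- derivative of `psiN` -/
noncomputable def psiD (n : ℕ) (x : ℝ) : ℝ := 1 / pn n * oscD n (2 * pn n ^ 6 + x / pn n ^ 2)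

lemma pn_one_le {n : ℕ} (hn : 2 ≤ n) : 1 ≤ pn n := by
  unfold pn
  apply Real.one_le_rpow _ (by norm_num)
  have : (2:ℝ) ≤ n := by exact_mod_cast hn
  linarith

lemma pn_pow (n : ℕ) : pn n ^ 12 = n := by
  unfold pn
  rw [← Real.rpow_natCast, ← Real.rpow_mul (by positivity)]; norm_num

lemma pn_third (n : ℕ) : (n : ℝ) ^ ((1:ℝ) / 3) = pn n ^ 4 := by
  unfold pn
  rw [← Real.rpow_natCast, ← Real.rpow_mul (by positivity)]; norm_num

lemma pn_twothird (n : ℕ) : (n : ℝ) ^ ((2:ℝ) / 3) = pn n ^ 8 := by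
  unfold pn
  rw [← Real.rpow_natCast, ← Real.rpow_mul (by positivity)]; norm_num

lemma pn_sqrt (n : ℕ) : √(n : ℝ) = pn n ^ 6 := by
  unfold pn
  rw [← Real.rpow_natCast, ← Real.rpow_mul (by positivity), Real.sqrt_eq_rpow]; norm_num

lemma pn_sixth (n : ℕ) : (n : ℝ) ^ (-(1:ℝ) / 6) = (pn n ^ 2)⁻¹ := by
  unfold pn
  rw [← Real.rpow_natCast, ← Real.rpow_mul (by positivity), ← Real.rpow_neg (by positivity)]
  norm_num

lemma psiUp_eq (n m : ℕ) (x : ℝ) :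
    psiUp n m x = pn n * osc m (2 * pn n ^ 6 + x / pn n ^ 2) := by
  unfold psiUp
  rw [pn_sqrt, pn_sixth]
  change pn n * _ = _
  congr 2
  rw [div_eq_inv_mul]

lemma psi_sol (n : ℕ) (h2 : 2 ≤ n) (hn : Even n) : Sol (pn n ^ 4) (psiN n) (psiD n) := by
  have hp := pn_one_le h2
  have hN := pn_pow n
  have hz := osc_zero n hn
  have haff : ∀ x, HasDerivAt (fun x => 2 * pn n ^ 6 + x / pn n ^ 2) (1 / pn n ^ 2) x := fun x =>
    ((hasDerivAt_id x).div_const _).const_add _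
  have epsi : psiN n = fun x => pn n * osc n (2 * pn n ^ 6 + x / pn n ^ 2) :=
    funext fun x => psiUp_eq n n x
  have eD : psiD n = fun x => 1 / pn n * oscD n (2 * pn n ^ 6 + x / pn n ^ 2) := rfl
  rw [← hN] at hz
  set p := pn n with hpdef
  have hp0 : 0 < p := by linarith
  have hlim : Tendsto (fun x => 2 * p ^ 6 + x / p ^ 2) atTop atTop :=
    tendsto_atTop_add_const_left _ _ (tendsto_id.atTop_div_const (by positivity))
  have hV : ∀ x, Vq (p ^ 4) x = ((2 * p ^ 6 + x / p ^ 2) ^ 2 / 4 - p ^ 12 - 1 / 2) / p ^ 4 := by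
    intro x
    unfold Vq
    field_simp
    ring
  have hstar : 2 * p ^ 6 + -(2 * (p ^ 4) ^ 2) / p ^ 2 = 0 := by
    field_simp; ring
  refine ⟨one_le_pow₀ hp, ?_, ?_, ?_, ?_, ?_, ?_⟩
  · intro x
    rw [epsi, eD]
    have := ((osc_deriv n (2 * p ^ 6 + x / p ^ 2)).comp x (haff x)).const_mul p
    refine this.congr_deriv ?_
    field_simp
  · intro x
    rw [epsi, eD, hV]
    have := ((oscD_deriv n (2 * p ^ 6 + x / p ^ 2)).comp x (haff x)).const_mul (1 / p)
    refine this.congr_deriv ?_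
    rw [← hN]
    field_simp
  · rw [epsi]
    simp only [hstar]
    rw [le_div_iff₀ (by positivity)]
    have h0 : 0 ≤ osc n 0 ^ 2 * p ^ 6 := by positivity
    have : (osc n 0 ^ 2 * p ^ 6) ^ 2 ≤ 1 := by
      calc _ = (osc n 0 ^ 2) ^ 2 * p ^ 12 := by ring
        _ ≤ 1 := hz
    have h1 : osc n 0 ^ 2 * p ^ 6 ≤ 1 := by nlinarith
    calc _ = osc n 0 ^ 2 * p ^ 6 := by ring
      _ ≤ 1 := h1
  · rw [eD]
    simp only [hstar, oscD_zero n hn, mul_zero]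
  · have := (osc_lim1 n).comp hlim
    refine this.congr fun x => ?_
    rw [epsi, eD]
    simp only [Function.comp]
    field_simp
  · have := ((osc_lim2 n).comp hlim).const_mul (1 / p ^ 2)
    rw [mul_zero] at this
    refine this.congr fun x => ?_
    rw [epsi, eD, hV]
    simp only [Function.comp]
    rw [← hN]
    field_simp

lemma psi_ladder (n : ℕ) (h2 : 2 ≤ n) (x : ℝ) :
    psiUp n (n - 1) x = psiD n x / pn n ^ 4 + (1 + x / (2 * (pn n ^ 4) ^ 2)) * psiN n x := by
  have hp := pn_one_le h2
  have hN := pn_sqrt n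
  obtain ⟨k, rfl⟩ : ∃ k, n = k + 1 := ⟨n - 1, by omega⟩
  have h := osc_ladder k (2 * pn (k + 1) ^ 6 + x / pn (k + 1) ^ 2)
  push_cast at hN
  rw [hN] at h
  unfold psiN
  rw [psiUp_eq, psiUp_eq, psiD, h, Nat.add_sub_cancel]
  have hp0 : 0 < pn (k + 1) := by linarith
  field_simp
  ring

lemma psi_reflect (n : ℕ) (h2 : 2 ≤ n) (hn : Even n) (x : ℝ) :
    psiN n (-(4 * (pn n ^ 4) ^ 2) - x) = psiN n x := by
  have hp := pn_one_le h2
  unfold psiN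
  rw [psiUp_eq, psiUp_eq, ← osc_neg n hn]
  have hp0 : 0 < pn n := by linarith
  congr 2
  field_simp
  ring

lemma psi_integrable (n : ℕ) (h2 : 2 ≤ n) (hn : Even n) : Integrable (psiN n) := by
  have S := psi_sol n h2 hn
  have hc := S.cont
  obtain ⟨C, hC, h⟩ := right_bound
  have hI : ∀ a, IntegrableOn (psiN n) (Ioi a) := by
    intro a
    refine integrable_of_isBigO_exp_neg (b := 1/4) (by norm_num) hc.continuousOn ?_
    refine Asymptotics.IsBigO.of_bound C ?_
    filter_upwards [eventually_ge_atTop (-2)] with x hx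
    have := (h _ _ _ S x hx).1
    rw [Real.norm_eq_abs, Real.norm_eq_abs, Real.abs_exp]
    convert this using 3
    ring
  have h1 := hI (-(2 * (pn n ^ 4) ^ 2))
  have hneg : IntegrableOn (psiN n) (Iio (-(2 * (pn n ^ 4) ^ 2))) := by
    have e : psiN n = fun x => psiN n (-(4 * (pn n ^ 4) ^ 2) - x) := by
      funext x; rw [psi_reflect n h2 hn]
    have := (Measure.measurePreserving_sub_left volume (-(4 * (pn n ^ 4) ^ 2))).integrableOn_comp_preimage
      (MeasurableEquiv.subLeft (-(4 * (pn n ^ 4) ^ 2))).measurableEmbedding (f := psiN n)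
      (s := Ioi (-(2 * (pn n ^ 4) ^ 2)))
    have h3 := this.2 h1
    have e2 : (fun x => -(4 * (pn n ^ 4) ^ 2) - x) ⁻¹' Ioi (-(2 * (pn n ^ 4) ^ 2))
        = Iio (-(2 * (pn n ^ 4) ^ 2)) := by
      ext x
      simp only [mem_Iio, mem_preimage, mem_Ioi]
      constructor <;> intro h <;> linarith
    rw [e2] at h3
    rw [e]
    exact h3
  rw [← integrableOn_univ, ← Iic_union_Ioi (a := -(2 * (pn n ^ 4) ^ 2))]
  exact ((integrableOn_Iic_iff_integrableOn_Iio (by simp)).2 hneg).union h1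

lemma epsPsi_eq (n : ℕ) (h2 : 2 ≤ n) (hn : Even n) (y : ℝ) :
    epsPsi n y = ∫ v in (-(2 * (pn n ^ 4) ^ 2))..y, psiN n v := by
  have hI := psi_integrable n h2 hn
  set s := -(2 * (pn n ^ 4) ^ 2) with hs
  have a1 : ∫ v, Real.sign (y - v) * psiN n v
      = (∫ v in Iic y, psiN n v) - ∫ v in Ioi y, psiN n v := by
    have e1 : ∫ v in Iic y, Real.sign (y - v) * psiN n v = ∫ v in Iic y, psiN n v := by
      rw [integral_Iic_eq_integral_Iio, integral_Iic_eq_integral_Iio]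
      refine setIntegral_congr_fun measurableSet_Iio fun v hv => ?_
      simp only [mem_Iio] at hv
      simp only [Real.sign_of_pos (sub_pos.2 hv), one_mul]
    have e2 : ∫ v in Ioi y, Real.sign (y - v) * psiN n v = - ∫ v in Ioi y, psiN n v := by
      rw [← integral_neg]
      refine setIntegral_congr_fun measurableSet_Ioi fun v hv => ?_
      simp only [mem_Ioi] at hv
      simp only [Real.sign_of_neg (sub_neg.2 hv), neg_mul, one_mul]
    have hJ : Integrable (fun v => Real.sign (y - v) * psiN n v) := by
      refine hI.bdd_mul (c := 1) ?_ ?_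
      · have : Measurable Real.sign := by
          unfold Real.sign
          exact Measurable.ite measurableSet_Iio measurable_const
            (Measurable.ite measurableSet_Ioi measurable_const measurable_const)
        exact (this.comp (measurable_const.sub measurable_id)).aestronglyMeasurable
      · refine Eventually.of_forall fun v => ?_
        rcases Real.sign_apply_eq (y - v) with h | h | h <;> rw [h] <;> norm_num
    rw [← intervalIntegral.integral_Iic_add_Ioi (b := y) hJ.integrableOn hJ.integrableOn, e1, e2]
    ring
  have a2 : ∫ v in Iic s, psiN n v = ∫ v in Ioi s, psiN n v := by
    have := (Measure.measurePreserving_sub_left volume (-(4 * (pn n ^ 4) ^ 2))).setIntegral_preimage_emb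
      (MeasurableEquiv.subLeft (-(4 * (pn n ^ 4) ^ 2))).measurableEmbedding (psiN n) (Ioi s)
    rw [← this, integral_Iic_eq_integral_Iio]
    have e : (fun x => -(4 * (pn n ^ 4) ^ 2) - x) ⁻¹' Ioi s = Iio s := by
      ext x
      simp only [mem_Iio, mem_preimage, mem_Ioi, hs]
      constructor <;> intro h <;> linarith
    rw [e]
    simp only [psi_reflect n h2 hn]
  have a3 := intervalIntegral.integral_Iic_sub_Iic (a := s) (b := y) hI.integrableOn hI.integrableOn
  have a4 := intervalIntegral.integral_Iic_add_Ioi (b := y) hI.integrableOn hI.integrableOn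
  have a5 := intervalIntegral.integral_Iic_add_Ioi (b := s) hI.integrableOn hI.integrableOn
  unfold epsPsi epsF
  rw [a1]
  linarith


/-- comparison quantity -/
noncomputable def Gs (A B s : ℝ) : ℝ := (A / B ^ 2 + B / A ^ 2) / s + (1 / A + 1 / B) / s
  + 2 / (A * B) + (A ^ 3 / B + B ^ 3 / A) / s + (A ^ 2 / B ^ 2 + B ^ 2 / A ^ 2) / s ^ 2 + 2 / s ^ 2

/-- symmetric majorant -/
noncomputable def Ts (X Y s : ℝ) : ℝ := 2 * (Y / X + X / Y) ^ 2 / s ^ 2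
  + (Y / X + X / Y) * (1 / X + 1 / Y) / s + 2 / (X * Y) + 2 * (Y ^ 3 / X + X ^ 3 / Y) / s

lemma Gs_symm (A B s : ℝ) : Gs A B s = Gs B A s := by unfold Gs; ring

lemma Ts_symm (X Y s : ℝ) : Ts X Y s = Ts Y X s := by unfold Ts; ring

lemma le_of_pow4 {u v : ℝ} (hv : 0 ≤ v) (h : u ^ 4 ≤ v ^ 4) : u ≤ v :=
  le_of_pow_le_pow_left₀ (by norm_num) hv h

lemma Ts_case1 {A B X Y s : ℝ} (hA : 1 ≤ A) (hB : 1 ≤ B) (hX : 1 ≤ X) (hY : 1 ≤ Y)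
    (eX : X ^ 4 = 1 + A ^ 4) (eY : Y ^ 4 = 1 + B ^ 4) (hs : 0 < s) : Ts X Y s ≤ 1000 * Gs A B s := by
  have hA4 := one_le_pow₀ hA (n := 4)
  have hB4 := one_le_pow₀ hB (n := 4)
  have x1 : A ≤ X := le_of_pow4 (by linarith) (by linarith)
  have y1 : B ≤ Y := le_of_pow4 (by linarith) (by linarith)
  have x2 : X ≤ 2 * A := le_of_pow4 (by linarith) (by rw [mul_pow]; linarith)
  have y2 : Y ≤ 2 * B := le_of_pow4 (by linarith) (by rw [mul_pow]; linarith)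
  have hA0 : 0 < A := by linarith
  have hB0 : 0 < B := by linarith
  have hX0 : 0 < X := by linarith
  have hY0 : 0 < Y := by linarith
  have e1 : Ts X Y s = (2 * (Y ^ 2 / X ^ 2 + X ^ 2 / Y ^ 2) + 4) / s ^ 2
      + (Y / X ^ 2 + X / Y ^ 2 + 1 / X + 1 / Y) / s + 2 / (X * Y)
      + 2 * (Y ^ 3 / X + X ^ 3 / Y) / s := by unfold Ts; field_simp; ring
  rw [e1]
  calc _ ≤ (2 * ((2 * B) ^ 2 / A ^ 2 + (2 * A) ^ 2 / B ^ 2) + 4) / s ^ 2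
      + ((2 * B) / A ^ 2 + (2 * A) / B ^ 2 + 1 / A + 1 / B) / s + 2 / (A * B)
      + 2 * ((2 * B) ^ 3 / A + (2 * A) ^ 3 / B) / s := by gcongr
    _ = 8 * ((A ^ 2 / B ^ 2 + B ^ 2 / A ^ 2) / s ^ 2) + 2 * (2 / s ^ 2)
      + 2 * ((A / B ^ 2 + B / A ^ 2) / s) + (1 / A + 1 / B) / s + 2 / (A * B)
      + 16 * ((A ^ 3 / B + B ^ 3 / A) / s) := by field_simp; ring
    _ ≤ _ := by
      unfold Gs
      have t1 : 0 ≤ (A ^ 2 / B ^ 2 + B ^ 2 / A ^ 2) / s ^ 2 := by positivity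
      have t2 : 0 ≤ 2 / s ^ 2 := by positivity
      have t3 : 0 ≤ (A / B ^ 2 + B / A ^ 2) / s := by positivity
      have t4 : 0 ≤ (1 / A + 1 / B) / s := by positivity
      have t5 : 0 ≤ 2 / (A * B) := by positivity
      have t6 : 0 ≤ (A ^ 3 / B + B ^ 3 / A) / s := by positivity
      linarith

lemma Ts_case2 {A B X Y s : ℝ} (hA : 0 < A) (hB : 0 < B) (hX : 1 ≤ X) (hY : 1 ≤ Y)
    (x2 : X ≤ 2) (y2 : Y ≤ 2) (hs : 0 < s) (hs4 : s ≤ 4) : Ts X Y s ≤ 1000 * Gs A B s := by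
  have hX0 : 0 < X := by linarith
  have hY0 : 0 < Y := by linarith
  have e1 : Ts X Y s ≤ 2 * (2 / 1 + 2 / 1) ^ 2 / s ^ 2
    + (2 / 1 + 2 / 1) * (1 / 1 + 1 / 1) / s + 2 / (1 * 1) + 2 * (2 ^ 3 / 1 + 2 ^ 3 / 1) / s := by
    unfold Ts; gcongr
  have e2 : 1 / s ≤ 4 / s ^ 2 := by
    rw [div_le_div_iff₀ hs (by positivity)]; nlinarith
  have e3 : 1 ≤ 16 / s ^ 2 := by
    rw [le_div_iff₀ (by positivity)]; nlinarith
  have e4 : 2 / s ^ 2 ≤ Gs A B s := by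
    unfold Gs
    have : 0 ≤ (A / B ^ 2 + B / A ^ 2) / s + (1 / A + 1 / B) / s
      + 2 / (A * B) + (A ^ 3 / B + B ^ 3 / A) / s + (A ^ 2 / B ^ 2 + B ^ 2 / A ^ 2) / s ^ 2 := by
      positivity
    linarith
  calc _ ≤ _ := e1
    _ = 32 * (1 / s ^ 2) + 40 * (1 / s) + 2 := by field_simp; ring
    _ ≤ 32 * (1 / s ^ 2) + 40 * (4 / s ^ 2) + 2 * (16 / s ^ 2) := by linarith
    _ = 112 * (2 / s ^ 2) := by field_simp; ring
    _ ≤ _ := by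
      have : 0 < 2 / s ^ 2 := by positivity
      linarith

lemma Ts_case3 {A B X Y s : ℝ} (hA : 0 < A) (hA1 : A ≤ 1) (hB : 1 ≤ B) (hX : 1 ≤ X)
    (hY : B ≤ Y) (x2 : X ≤ 2) (y2 : Y ≤ 2 * B) (hs : B ^ 4 / 2 ≤ s) :
    Ts X Y s ≤ 1000 * Gs A B s := by
  have hX0 : 0 < X := by linarith
  have hB0 : 0 < B := by linarith
  have hY0 : 0 < Y := by linarith
  have hs0 : 0 < s := lt_of_lt_of_le (by positivity) hs
  have e1 : Ts X Y s ≤ 2 * (2 * B / 1 + 2 * B / 1) ^ 2 / (B ^ 4 / 2) ^ 2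
    + (2 * B / 1 + 2 * B / 1) * (1 / 1 + 1 / 1) / (B ^ 4 / 2) + 2 / (1 * B)
    + 2 * ((2 * B) ^ 3 / 1 + (2 * B) ^ 3 / 1) / (B ^ 4 / 2) := by
    have h1Y : 1 ≤ Y := by linarith
    have h2B : X ≤ 2 * B := by linarith
    unfold Ts; gcongr
  have e3 : 1 / B ^ 6 ≤ 1 / B := one_div_le_one_div_of_le hB0 (le_self_pow₀ hB (by norm_num))
  have e4 : 1 / B ^ 3 ≤ 1 / B := one_div_le_one_div_of_le hB0 (le_self_pow₀ hB (by norm_num))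
  have e5 : 2 / (A * B) ≤ Gs A B s := by
    unfold Gs
    have : 0 ≤ (A / B ^ 2 + B / A ^ 2) / s + (1 / A + 1 / B) / s
      + 2 / s ^ 2 + (A ^ 3 / B + B ^ 3 / A) / s + (A ^ 2 / B ^ 2 + B ^ 2 / A ^ 2) / s ^ 2 := by
      positivity
    linarith
  have e6 : 2 / B ≤ 2 / (A * B) := by
    apply div_le_div_of_nonneg_left (by norm_num) (by positivity); nlinarith
  calc _ ≤ _ := e1
    _ = 128 * (1 / B ^ 6) + 16 * (1 / B ^ 3) + 66 * (1 / B) := by field_simp; ring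
    _ ≤ 105 * (2 / B) := by
      have : 2 / B = 2 * (1 / B) := by ring
      rw [this]; linarith
    _ ≤ _ := by
      have : 0 < 2 / B := by positivity
      linarith

lemma Ts_le_Gs {x y A B : ℝ} (hA : 0 < A) (hB : 0 < B) (eA : A ^ 4 = |x|) (eB : B ^ 4 = |y|)
    (hxy : x ≠ y) : Ts (wt x) (wt y) |x - y| ≤ 1000 * Gs A B |x - y| := by
  have hX := one_le_wt x
  have hY := one_le_wt y
  have eX := wt_pow x
  have eY := wt_pow y
  rw [← eA] at eX
  rw [← eB] at eY
  have hs : 0 < |x - y| := abs_pos.2 (sub_ne_zero.2 hxy)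
  have small : ∀ {u v : ℝ}, u ^ 4 ≤ 2 → v ^ 4 = 1 + u ^ 4 → v ≤ 2 := fun h1 h2 =>
    le_of_pow4 (by norm_num) (by rw [h2]; linarith)
  have big : ∀ {A B X Y s : ℝ}, 0 < A → 0 < B → A ^ 4 < 1 → 2 < B ^ 4 → 1 ≤ X → 1 ≤ Y →
      X ^ 4 = 1 + A ^ 4 → Y ^ 4 = 1 + B ^ 4 → B ^ 4 - A ^ 4 ≤ s → Ts X Y s ≤ 1000 * Gs A B s := by
    intro A B X Y s hA hB ha hb hX hY eX eY hs
    have hB1 : 1 ≤ B := le_of_pow4 hB.le (by linarith)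
    refine Ts_case3 hA (le_of_pow4 (by norm_num) (by linarith)) hB1 hX
      (le_of_pow4 (by linarith) (by linarith)) (small (by linarith) eX)
      (le_of_pow4 (by linarith) (by rw [mul_pow]; linarith)) (by linarith)
  have s1 : |y| - |x| ≤ |x - y| := by rw [abs_sub_comm]; exact abs_sub_abs_le_abs_sub y x
  have s2 : |x| - |y| ≤ |x - y| := abs_sub_abs_le_abs_sub x y
  have s3 : |x - y| ≤ |x| + |y| := abs_sub x y
  rw [← eA, ← eB] at s1 s2 s3
  rcases lt_or_ge (A ^ 4) 1 with ha | ha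
  · rcases lt_or_ge 2 (B ^ 4) with hb | hb
    · exact big hA hB ha hb hX hY eX eY s1
    · exact Ts_case2 hA hB hX hY (small (by linarith) eX) (small hb eY) hs (by linarith)
  · rcases lt_or_ge (B ^ 4) 1 with hb | hb
    · rcases lt_or_ge 2 (A ^ 4) with ha' | ha'
      · rw [Ts_symm, Gs_symm]
        exact big hB hA hb ha' hY hX eY eX s2
      · exact Ts_case2 hA hB hX hY (small ha' eX) (small (by linarith) eY) hs (by linarith)
    · exact Ts_case1 (le_of_pow4 hA.le (by linarith)) (le_of_pow4 hB.le (by linarith)) hX hY eX eY hs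


lemma Gs_eq {x y : ℝ} (hx : x ≠ 0) (hy : y ≠ 0) :
    Gs (|x| ^ ((1:ℝ) / 4)) (|y| ^ ((1:ℝ) / 4)) |x - y| = Ghat (-1/4) (1/2) 1 x y + Ghat 0 (1/4) 1 x y
      + Ghat (1/4) (1/4) 0 x y + Ghat (-3/4) (1/4) 1 x y + Ghat (-1/2) (1/2) 2 x y + Ghat 0 0 2 x y := by
  have h : ∀ u : ℝ, u ≠ 0 → |u| ^ (-(-1/4 : ℝ)) = |u| ^ ((1:ℝ) / 4) ∧
      |u| ^ (-(1/2 : ℝ)) = ((|u| ^ ((1:ℝ) / 4)) ^ 2)⁻¹ ∧ |u| ^ (-(1/4 : ℝ)) = (|u| ^ ((1:ℝ) / 4))⁻¹ ∧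
      |u| ^ (-(-3/4 : ℝ)) = (|u| ^ ((1:ℝ) / 4)) ^ 3 ∧ |u| ^ (-(-1/2 : ℝ)) = (|u| ^ ((1:ℝ) / 4)) ^ 2 := by
    intro u hu
    have hu' : 0 < |u| := abs_pos.2 hu
    refine ⟨by norm_num, ?_, ?_, ?_, ?_⟩
    · rw [Real.rpow_neg hu'.le, ← Real.rpow_natCast, ← Real.rpow_mul hu'.le]; norm_num
    · rw [Real.rpow_neg hu'.le]
    · rw [← Real.rpow_natCast, ← Real.rpow_mul hu'.le]; norm_num
    · rw [← Real.rpow_natCast, ← Real.rpow_mul hu'.le]; norm_num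
  obtain ⟨a1, a2, a3, a4, a5⟩ := h x hx
  obtain ⟨b1, b2, b3, b4, b5⟩ := h y hy
  have s1 : |x - y| ^ (-(1:ℝ)) = |x - y|⁻¹ := by rw [Real.rpow_neg (abs_nonneg _), Real.rpow_one]
  have s2 : |x - y| ^ (-(2:ℝ)) = (|x - y| ^ 2)⁻¹ := by
    rw [Real.rpow_neg (abs_nonneg _)]; norm_num
  unfold Ghat Gf Gs
  rw [abs_sub_comm y x, s1, s2, a1, a2, a3, a4, a5, b1, b2, b3, b4, b5]
  simp only [neg_zero, Real.rpow_zero]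
  ring

lemma psi_deriv (n : ℕ) (h2 : 2 ≤ n) (hn : Even n) : deriv (psiN n) = psiD n :=
  funext fun x => ((psi_sol n h2 hn).hd x).deriv

lemma KAiN_eq (n : ℕ) (h2 : 2 ≤ n) (hn : Even n) (u x : ℝ) :
    KAiN n u x = -dslope (Nf (psiN n) (psiD n) x) x u
      - (1 / (2 * pn n ^ 4)) * (psiN n u * psiN n x) := by
  have S := psi_sol n h2 hn
  unfold KAiN
  rw [psi_deriv n h2 hn, pn_third]
  split_ifs with h
  · subst h
    rw [dslope_same, (Nf_hasDerivAt S u u).deriv, (S.hd' u).deriv]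
    ring
  · rw [dslope_of_ne _ h, slope_def_field]
    have : u - x ≠ 0 := sub_ne_zero.2 h
    unfold Nf
    field_simp
    ring

lemma eps_bound : ∃ C : ℝ, 0 < C ∧ ∀ n : ℕ, 2 ≤ n → Even n → ∀ y, -(2 * (pn n ^ 4) ^ 2) ≤ y →
    |epsPsi n y| ≤ C := by
  obtain ⟨C, hC, h⟩ := int_bound_const
  refine ⟨C, hC, fun n h2 hn y hy => ?_⟩
  rw [epsPsi_eq n h2 hn]
  exact h _ _ _ (psi_sol n h2 hn) _ _ le_rfl hy

lemma J_int : ∃ C : ℝ, 0 < C ∧ ∀ n : ℕ, 2 ≤ n → Even n → ∀ x y, -(2 * (pn n ^ 4) ^ 2) ≤ x →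
    -(2 * (pn n ^ 4) ^ 2) ≤ y →
    |(∫ u in x..y, J1N n u x) - (1/2) * Real.sign (y - x)| ≤ C := by
  obtain ⟨C1, hC1, h1⟩ := kernel_int
  obtain ⟨C2, hC2, h2⟩ := int_bound_const
  obtain ⟨C3, hC3, h3⟩ := int_phi_bound
  obtain ⟨B, hB, hb⟩ := basic_bounds
  obtain ⟨E, hE, he⟩ := eps_bound
  refine ⟨C1 + B * C2 + E * C3 + 1, by positivity, fun n hn2 hn x y hx hy => ?_⟩
  have S := psi_sol n hn2 hn
  have k1 := h1 _ _ _ S x y hx hy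
  have k2 := h2 _ _ _ S x y hx hy
  have k3 := h3 _ _ _ S x y hx hy
  have k4 := he n hn2 hn x hx
  have k5 : |psiN n x| ≤ B := ((hb _ _ _ S x hx).1).trans (div_le_self hB.le (one_le_wt x))
  have hν := S.hν
  have hν0 : 0 < pn n ^ 4 := by linarith
  have e : ∀ u, J1N n u x = (-dslope (Nf (psiN n) (psiD n) x) x u
      - (1 / (2 * pn n ^ 4) * psiN n x) * psiN n u)
      + ((1/2) * epsPsi n x) * (psiD n u / pn n ^ 4 + (1 + u / (2 * (pn n ^ 4) ^ 2)) * psiN n u) := by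
    intro u
    unfold J1N
    rw [KAiN_eq n hn2 hn, psi_ladder n hn2]
    ring
  simp only [e]
  have c1 := dslope_cont S x
  have c2 := S.cont
  have c3 : Continuous (fun u => psiD n u / pn n ^ 4 + (1 + u / (2 * (pn n ^ 4) ^ 2)) * psiN n u) := by
    have := S.cont'
    fun_prop
  have hi : (∫ u in x..y, ((-dslope (Nf (psiN n) (psiD n) x) x u
      - (1 / (2 * pn n ^ 4) * psiN n x) * psiN n u)
      + ((1/2) * epsPsi n x) * (psiD n u / pn n ^ 4 + (1 + u / (2 * (pn n ^ 4) ^ 2)) * psiN n u)))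
      = (-(∫ u in x..y, dslope (Nf (psiN n) (psiD n) x) x u)
        - (1 / (2 * pn n ^ 4) * psiN n x) * ∫ u in x..y, psiN n u) + ((1/2) * epsPsi n x) *
        ∫ u in x..y, (psiD n u / pn n ^ 4 + (1 + u / (2 * (pn n ^ 4) ^ 2)) * psiN n u) := by
    rw [intervalIntegral.integral_add, intervalIntegral.integral_sub, intervalIntegral.integral_neg,
      intervalIntegral.integral_const_mul, intervalIntegral.integral_const_mul]
    · exact c1.neg.intervalIntegrable _ _
    · exact (c2.const_mul _).intervalIntegrable _ _
    · exact (c1.neg.sub (c2.const_mul _)).intervalIntegrable _ _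
    · exact (c3.const_mul _).intervalIntegrable _ _
  rw [hi]
  generalize (∫ u in x..y, dslope (Nf (psiN n) (psiD n) x) x u) = I1 at *
  generalize (∫ u in x..y, psiN n u) = I2 at *
  generalize (∫ u in x..y, (psiD n u / pn n ^ 4 + (1 + u / (2 * (pn n ^ 4) ^ 2)) * psiN n u)) = I3 at *
  have q1 : |(1 / (2 * pn n ^ 4) * psiN n x) * I2| ≤ B * C2 := by
    have : 1 / (2 * pn n ^ 4) ≤ 1 := by
      rw [div_le_one (by positivity)]; linarith
    rw [abs_mul, abs_mul, abs_of_nonneg (by positivity : 0 ≤ 1 / (2 * pn n ^ 4))]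
    calc _ ≤ (1 * B) * C2 := by gcongr
      _ = _ := by ring
  have q2 : |((1/2) * epsPsi n x) * I3| ≤ E * C3 := by
    rw [abs_mul, abs_mul, abs_of_nonneg (by norm_num : (0:ℝ) ≤ 1/2)]
    calc _ ≤ (1 * E) * C3 := by gcongr; norm_num
      _ = _ := by ring
  have q3 : |Real.sign (y - x)| ≤ 1 := by
    rcases Real.sign_apply_eq (y - x) with h | h | h <;> rw [h] <;> norm_num
  rw [abs_le] at *
  constructor <;> linarith [q1.1, q1.2, q2.1, q2.2, q3.1, q3.2, k1.1, k1.2]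

lemma psiUp_bound : ∃ C : ℝ, 0 < C ∧ ∀ n : ℕ, 2 ≤ n → Even n → ∀ x, -(2 * (pn n ^ 4) ^ 2) ≤ x →
    |psiUp n (n - 1) x| ≤ C / wt x := by
  obtain ⟨B, hB, hb⟩ := basic_bounds
  refine ⟨2 * B, by positivity, fun n h2 hn x hx => ?_⟩
  have S := psi_sol n h2 hn
  obtain ⟨-, -, -, b1, b2⟩ := hb _ _ _ S x hx
  rw [psi_ladder n h2]
  refine (abs_add_le _ _).trans ?_
  have hν := S.hν
  rw [abs_div, abs_of_pos (by linarith : 0 < pn n ^ 4)]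
  calc _ ≤ B / wt x + B / wt x := add_le_add b1 b2
    _ = _ := by ring

lemma J_bound : ∃ C : ℝ, 0 < C ∧ ∀ n : ℕ, 2 ≤ n → Even n → ∀ x y, -(2 * (pn n ^ 4) ^ 2) ≤ x →
    -(2 * (pn n ^ 4) ^ 2) ≤ y → x ≠ y →
    |J1N n x y| ≤ C * ((wt y / wt x + wt x / wt y) / |x - y| + 1 / wt x) := by
  obtain ⟨B, hB, hb⟩ := basic_bounds
  obtain ⟨E, hE, he⟩ := eps_bound
  obtain ⟨P, hP, hp⟩ := psiUp_bound
  refine ⟨B ^ 2 + P * E, by positivity, fun n hn2 hn x y hx hy hxy => ?_⟩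
  have S := psi_sol n hn2 hn
  have hν := S.hν
  obtain ⟨x1, x2, -, -, -⟩ := hb _ _ _ S x hx
  obtain ⟨y1, y2, -, -, -⟩ := hb _ _ _ S y hy
  have p1 := hp n hn2 hn x hx
  have e1 := he n hn2 hn y hy
  have hs : 0 < |x - y| := abs_pos.2 (sub_ne_zero.2 hxy)
  have hX := one_le_wt x
  have hY := one_le_wt y
  unfold J1N KAiN
  rw [if_neg hxy, psi_deriv n hn2 hn, pn_third]
  set X := wt x
  set Y := wt y
  set s := |x - y| with hsd
  have hX0 : 0 < X := by linarith
  have hY0 : 0 < Y := by linarith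
  have hν0 : 0 < pn n ^ 4 := by linarith
  have t1 : |(psiN n x * psiD n y - psiD n x * psiN n y) / (x - y)|
      ≤ B ^ 2 * ((Y / X + X / Y) / s) := by
    rw [abs_div, ← hsd]
    calc _ ≤ (|psiN n x| * |psiD n y| + |psiD n x| * |psiN n y|) / s := by
          gcongr
          rw [← abs_mul, ← abs_mul]
          exact abs_sub _ _
      _ ≤ (B / X * (B * Y) + B * X * (B / Y)) / s := by gcongr
      _ = _ := by ring
  have t2 : |1 / (2 * pn n ^ 4) * (psiN n x * psiN n y)| ≤ B ^ 2 * (1 / X) := by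
    have : 1 / (2 * pn n ^ 4) ≤ 1 := by
      rw [div_le_one (by positivity)]; linarith
    rw [abs_mul, abs_mul, abs_of_nonneg (by positivity : 0 ≤ 1 / (2 * pn n ^ 4))]
    calc _ ≤ 1 * (B / X * (B / 1)) := by
          gcongr
          exact y1.trans (by gcongr)
      _ = _ := by ring
  have t3 : |1 / 2 * psiUp n (n - 1) x * epsPsi n y| ≤ P * E * (1 / X) := by
    rw [abs_mul, abs_mul, abs_of_nonneg (by norm_num : (0:ℝ) ≤ 1/2)]
    calc _ ≤ (1 * (P / X)) * E := by gcongr; norm_num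
      _ = _ := by ring
  have t4 : 0 ≤ P * E * ((Y / X + X / Y) / s) := by positivity
  have t5 : (B ^ 2 + P * E) * ((Y / X + X / Y) / s + 1 / X) = B ^ 2 * ((Y / X + X / Y) / s)
    + P * E * ((Y / X + X / Y) / s) + B ^ 2 * (1 / X) + P * E * (1 / X) := by ring
  rw [t5]
  rw [abs_le] at *
  constructor <;> linarith [t1.1, t1.2, t2.1, t2.2, t3.1, t3.2]

lemma J_deriv_bound : ∃ C : ℝ, 0 < C ∧ ∀ n : ℕ, 2 ≤ n → Even n → ∀ x y, -(2 * (pn n ^ 4) ^ 2) ≤ x →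
    -(2 * (pn n ^ 4) ^ 2) ≤ y → x ≠ y →
    |deriv (fun v => J1N n x v) y| ≤ C * ((wt y ^ 3 / wt x + wt x * wt y) / |x - y|
      + (wt y / wt x + wt x / wt y) / |x - y| ^ 2 + 1 / (wt x * wt y)) := by
  obtain ⟨B, hB, hb⟩ := basic_bounds
  obtain ⟨P, hP, hp⟩ := psiUp_bound
  refine ⟨B ^ 2 + P * B, by positivity, fun n hn2 hn x y hx hy hxy => ?_⟩
  have S := psi_sol n hn2 hn
  have hν := S.hν
  obtain ⟨x1, x2, -, -, -⟩ := hb _ _ _ S x hx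
  obtain ⟨y1, y2, y3, y4, -⟩ := hb _ _ _ S y hy
  have p1 := hp n hn2 hn x hx
  have hs : 0 < |x - y| := abs_pos.2 (sub_ne_zero.2 hxy)
  have hX0 := wt_pos x
  have hY0 := wt_pos y
  have hν0 : 0 < pn n ^ 4 := by linarith
  have hne : x - y ≠ 0 := sub_ne_zero.2 hxy
  have hder : HasDerivAt (fun v => J1N n x v)
      ((psiN n x * (Vq (pn n ^ 4) y * psiN n y) - psiD n x * psiD n y) / (x - y)
        + (psiN n x * psiD n y - psiD n x * psiN n y) / (x - y) ^ 2
        - 1 / (2 * pn n ^ 4) * (psiN n x * psiD n y)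
        + 1 / 2 * psiUp n (n - 1) x * psiN n y) y := by
    have d1 := ((Nf_hasDerivAt S x y).div ((hasDerivAt_id y).const_sub x) hne).sub
      (((S.hd y).const_mul (psiN n x)).const_mul (1 / (2 * pn n ^ 4)))
    have d2 := (hasDerivAt_int S.cont (-(2 * (pn n ^ 4) ^ 2)) y).const_mul
      (1 / 2 * psiUp n (n - 1) x)
    have d3 := d1.add d2
    refine (d3.congr_of_eventuallyEq ?_).congr_deriv ?_
    · filter_upwards [isOpen_ne.mem_nhds (Ne.symm hxy)] with v hv
      unfold J1N KAiN
      rw [if_neg (Ne.symm hv), psi_deriv n hn2 hn, pn_third, epsPsi_eq n hn2 hn]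
      simp [Nf]
    · simp only [id, Nf]
      field_simp
      ring
  rw [hder.deriv]
  set X := wt x
  set Y := wt y
  set s := |x - y| with hsd
  have t1 : |(psiN n x * (Vq (pn n ^ 4) y * psiN n y) - psiD n x * psiD n y) / (x - y)|
      ≤ B ^ 2 * ((Y ^ 3 / X + X * Y) / s) := by
    rw [abs_div, ← hsd]
    calc _ ≤ (|psiN n x| * |Vq (pn n ^ 4) y * psiN n y| + |psiD n x| * |psiD n y|) / s := by
          gcongr
          rw [← abs_mul, ← abs_mul]
          exact abs_sub _ _
      _ ≤ (B / X * (B * Y ^ 3) + B * X * (B * Y)) / s := by gcongr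
      _ = _ := by ring
  have t2 : |(psiN n x * psiD n y - psiD n x * psiN n y) / (x - y) ^ 2|
      ≤ B ^ 2 * ((Y / X + X / Y) / s ^ 2) := by
    rw [abs_div, abs_pow, ← hsd]
    calc _ ≤ (|psiN n x| * |psiD n y| + |psiD n x| * |psiN n y|) / s ^ 2 := by
          gcongr
          rw [← abs_mul, ← abs_mul]
          exact abs_sub _ _
      _ ≤ (B / X * (B * Y) + B * X * (B / Y)) / s ^ 2 := by gcongr
      _ = _ := by ring
  have t3 : |1 / (2 * pn n ^ 4) * (psiN n x * psiD n y)| ≤ B ^ 2 * (1 / (X * Y)) := by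
    rw [abs_mul, abs_mul, abs_of_nonneg (by positivity : 0 ≤ 1 / (2 * pn n ^ 4))]
    calc _ = 1 / 2 * (|psiN n x| * (|psiD n y| / pn n ^ 4)) := by field_simp
      _ ≤ 1 * (B / X * (B / Y)) := by gcongr; norm_num
      _ = _ := by field_simp
  have t4 : |1 / 2 * psiUp n (n - 1) x * psiN n y| ≤ P * B * (1 / (X * Y)) := by
    rw [abs_mul, abs_mul, abs_of_nonneg (by norm_num : (0:ℝ) ≤ 1/2)]
    calc _ ≤ (1 * (P / X)) * (B / Y) := by gcongr; norm_num
      _ = _ := by field_simp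
  have t5 : 0 ≤ P * B * ((Y ^ 3 / X + X * Y) / s + (Y / X + X / Y) / s ^ 2) := by positivity
  have t6 : (B ^ 2 + P * B) * ((Y ^ 3 / X + X * Y) / s + (Y / X + X / Y) / s ^ 2 + 1 / (X * Y))
    = B ^ 2 * ((Y ^ 3 / X + X * Y) / s) + B ^ 2 * ((Y / X + X / Y) / s ^ 2)
      + P * B * ((Y ^ 3 / X + X * Y) / s + (Y / X + X / Y) / s ^ 2) + B ^ 2 * (1 / (X * Y))
      + P * B * (1 / (X * Y)) := by ring
  rw [t6]
  rw [abs_le] at *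
  constructor <;> linarith [t1.1, t1.2, t2.1, t2.2, t3.1, t3.2, t4.1, t4.2]

lemma T_le_Ts {X Y s : ℝ} (hX : 1 ≤ X) (hY : 1 ≤ Y) (hs : 0 < s) :
    ((Y / X + X / Y) / s + 1 / X) * ((Y / X + X / Y) / s + 1 / Y)
      + ((Y ^ 3 / X + X * Y) / s + (Y / X + X / Y) / s ^ 2 + 1 / (X * Y)) ≤ Ts X Y s := by
  have hX0 : 0 < X := by linarith
  have hY0 : 0 < Y := by linarith
  have r1 : 1 ≤ Y / X + X / Y := by
    rw [div_add_div _ _ hX0.ne' hY0.ne', le_div_iff₀ (by positivity)]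
    nlinarith [sq_nonneg (X - Y)]
  have r2 : X * Y ≤ Y ^ 3 / X + X ^ 3 / Y := by
    rw [div_add_div _ _ hX0.ne' hY0.ne', le_div_iff₀ (by positivity)]
    nlinarith [sq_nonneg (X ^ 2 - Y ^ 2), sq_nonneg (X * Y)]
  have r3 : 0 ≤ X ^ 3 / Y := by positivity
  have e : ((Y / X + X / Y) / s + 1 / X) * ((Y / X + X / Y) / s + 1 / Y)
      + ((Y ^ 3 / X + X * Y) / s + (Y / X + X / Y) / s ^ 2 + 1 / (X * Y))
      = ((Y / X + X / Y) ^ 2 + (Y / X + X / Y)) / s ^ 2 + (Y / X + X / Y) * (1 / X + 1 / Y) / s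
        + 2 / (X * Y) + (Y ^ 3 / X + X * Y) / s := by
    generalize Y / X + X / Y = R
    field_simp
    ring
  rw [e]
  unfold Ts
  have q1 : (Y / X + X / Y) ^ 2 + (Y / X + X / Y) ≤ 2 * (Y / X + X / Y) ^ 2 := by nlinarith
  have q2 : Y ^ 3 / X + X * Y ≤ 2 * (Y ^ 3 / X + X ^ 3 / Y) := by linarith
  gcongr

/-- uniform bound on the scalar part `L₁ⁿ` of the quaternion product of
finite-`n` Airy₁ kernels (`n` even). -/
theorem L1N_bounds :
    ∃ C : ℝ, 0 < C ∧ ∀ n : ℕ, 2 ≤ n → Even n → ∀ x y : ℝ,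
      -(2 * (n : ℝ) ^ ((2:ℝ)/3)) ≤ x → -(2 * (n : ℝ) ^ ((2:ℝ)/3)) ≤ y →
      x ≠ y → x ≠ 0 → y ≠ 0 →
      |L1N n x y| ≤ C *
        (Ghat (-(1:ℝ)/4) ((1:ℝ)/2) 1 x y + Ghat 0 ((1:ℝ)/4) 1 x y +
          Ghat ((1:ℝ)/4) ((1:ℝ)/4) 0 x y + Ghat (-(3:ℝ)/4) ((1:ℝ)/4) 1 x y +
          Ghat (-(1:ℝ)/2) ((1:ℝ)/2) 2 x y + Ghat 0 0 2 x y) := by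
  obtain ⟨CJ, hCJ, hJ⟩ := J_bound
  obtain ⟨CD, hCD, hD⟩ := J_deriv_bound
  obtain ⟨CI, hCI, hI⟩ := J_int
  refine ⟨(CJ ^ 2 + CD * CI) * 1000, by positivity, ?_⟩
  intro n h2 hn x y hx hy hxy hx0 hy0
  have hst : -(2 * (n : ℝ) ^ ((2:ℝ)/3)) = -(2 * (pn n ^ 4) ^ 2) := by
    rw [pn_twothird]; ring
  rw [hst] at hx hy
  have j1 := hJ n h2 hn x y hx hy hxy
  have j2 := hJ n h2 hn y x hy hx (Ne.symm hxy)
  have d1 := hD n h2 hn x y hx hy hxy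
  have i1 := hI n h2 hn x y hx hy
  have hX := one_le_wt x
  have hY := one_le_wt y
  have hX0 := wt_pos x
  have hY0 := wt_pos y
  have hs : 0 < |x - y| := abs_pos.2 (sub_ne_zero.2 hxy)
  rw [abs_sub_comm y x, add_comm (wt x / wt y)] at j2
  have t1 := T_le_Ts hX hY hs
  have hax : 0 < |x| := abs_pos.2 hx0
  have hay : 0 < |y| := abs_pos.2 hy0
  have e4 : ∀ a : ℝ, 0 < a → (a ^ ((1:ℝ) / 4)) ^ 4 = a := by
    intro a ha
    rw [← Real.rpow_natCast, ← Real.rpow_mul ha.le]; norm_num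
  have t2 := Ts_le_Gs (x := x) (y := y) (A := |x| ^ ((1:ℝ) / 4)) (B := |y| ^ ((1:ℝ) / 4))
    (by positivity) (by positivity) (e4 _ hax) (e4 _ hay) hxy
  rw [Gs_eq hx0 hy0] at t2
  set Z1 := (wt y / wt x + wt x / wt y) / |x - y| + 1 / wt x
  set Z2 := (wt y / wt x + wt x / wt y) / |x - y| + 1 / wt y
  set Z3 := (wt y ^ 3 / wt x + wt x * wt y) / |x - y|
      + (wt y / wt x + wt x / wt y) / |x - y| ^ 2 + 1 / (wt x * wt y)
  have z1 : 0 ≤ Z1 := by positivity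
  have z2 : 0 ≤ Z2 := by positivity
  have z3 : 0 ≤ Z3 := by positivity
  have main : |L1N n x y| ≤ (CJ ^ 2 + CD * CI) * (Z1 * Z2 + Z3) := by
    unfold L1N
    refine (abs_sub _ _).trans ?_
    rw [abs_mul, abs_mul]
    calc _ ≤ (CJ * Z1) * (CJ * Z2) + (CD * Z3) * CI := by gcongr
      _ ≤ (CJ * Z1) * (CJ * Z2) + (CD * Z3) * CI + (CJ ^ 2 * Z3 + CD * CI * (Z1 * Z2)) := by
        have : 0 ≤ CJ ^ 2 * Z3 + CD * CI * (Z1 * Z2) := by positivity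
        linarith
      _ = _ := by ring
  refine main.trans ?_
  rw [mul_assoc]
  gcongr
  exact t1.trans t2
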